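/- arXiv:2001.02753 — 4 statements merged into one kernel-verified Lean document; each statement's English description precedes it below -/
import Mathlib

section
/- Let A : ℝ² → ℝ^{n×n} be a continuously twice differentiable family of real symmetric matrices whose two smallest eigenvalues satisfy λ₁(α) = λ₂(α) < λ₃(α) at a point α ∈ ℝ², and suppose α is a non-degenerate conical point, i.e. the 2×2 matrix J_α(A^α) (the Jacobian at α of the map r ↦ (⟨v₁, A(r)v₁⟩ − ⟨v₂, A(r)v₂⟩, 2⟨v₁, A(r)v₂⟩) computed in an orthonormal eigenvector basis v₁, v₂ of A(α)) is invertible. Then there exist an open neighborhood Ω ⊂ ℝ² of α and a constant C > 0 such that for every rᵢ ∈ Ω, the point r_{i+1} = rᵢ − J_{rᵢ}(A^{rᵢ})⁻¹ · (λ₁(rᵢ) − λ₂(rᵢ), 0)ᵀ, where J_{rᵢ}(A^{rᵢ}) is the 2×2 matrix with first row (⟨v₁,∂ₓA v₁⟩ − ⟨v₂,∂ₓA v₂⟩, ⟨v₁,∂_y A v₁⟩ − ⟨v₂,∂_y A v₂⟩) and second row (2⟨v₁,∂ₓA v₂⟩, 2⟨v₁,∂_y A v₂⟩) with v₁, v₂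 orthonormal eigenvectors of A(rᵢ) for λ₁(rᵢ), λ₂(rᵢ) and the partial derivatives of A evaluated at rᵢ, satisfies |r_{i+1} − α| ≤ C |rᵢ − α|². -/
noncomputable section
open Matrix

/-- Partial derivative in the `x` direction. -/
def pdx {E : Type*} [NormedAddCommGroup E] [NormedSpace ℝ E] (f : ℝ × ℝ → E) (r : ℝ × ℝ) : E :=
  fderiv ℝ f r (1, 0)

/-- Partial derivative in the `y` direction. -/
def pdy {E : Type*} [NormedAddCommGroup E] [NormedSpace ℝ E] (f : ℝ × ℝ → E) (r : ℝ × ℝ) : E :=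
  fderiv ℝ f r (0, 1)

/-- The target function `F(S) = (S₁₁ − S₂₂, 2 S₁₂)` of a 2×2 matrix family. -/
def Ftar (S : ℝ × ℝ → Matrix (Fin 2) (Fin 2) ℝ) (r : ℝ × ℝ) : ℝ × ℝ :=
  (S r 0 0 - S r 1 1, 2 * S r 0 1)

/-- The Jacobian `J_r(S) = D_r F(S)` of the target function. -/
def Jmat (S : ℝ × ℝ → Matrix (Fin 2) (Fin 2) ℝ) (r : ℝ × ℝ) : Matrix (Fin 2) (Fin 2) ℝ :=
  !![pdx (fun p => S p 0 0 - S p 1 1) r, pdy (fun p => S p 0 0 - S p 1 1) r;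
     pdx (fun p => 2 * S p 0 1) r, pdy (fun p => 2 * S p 0 1) r]

/-- Action of a 2×2 matrix on `ℝ × ℝ`. -/
def mulVec2 (M : Matrix (Fin 2) (Fin 2) ℝ) (v : ℝ × ℝ) : ℝ × ℝ :=
  (M 0 0 * v.1 + M 0 1 * v.2, M 1 0 * v.1 + M 1 1 * v.2)

/-- The family `A` expressed in the constant basis `v₁, v₂`:
the 2×2 matrix `Ã(r) = (⟨vᵢ, A(r) vⱼ⟩)`. -/
def tildeA {n : ℕ} (A : ℝ × ℝ → Matrix (Fin n) (Fin n) ℝ) (v₁ v₂ : Fin n → ℝ) :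
    ℝ × ℝ → Matrix (Fin 2) (Fin 2) ℝ := fun r =>
  !![v₁ ⬝ᵥ (A r).mulVec v₁, v₁ ⬝ᵥ (A r).mulVec v₂;
     v₂ ⬝ᵥ (A r).mulVec v₁, v₂ ⬝ᵥ (A r).mulVec v₂]

/-- The discriminant of a 2×2 symmetric matrix family. -/
def discB (B : ℝ × ℝ → Matrix (Fin 2) (Fin 2) ℝ) (r : ℝ × ℝ) : ℝ :=
  (B r 0 0 - B r 1 1) ^ 2 + 4 * (B r 0 1) ^ 2

/-- The Hessian (matrix of second partial derivatives) of `g : ℝ² → ℝ`. -/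
def Hess2 (g : ℝ × ℝ → ℝ) (α : ℝ × ℝ) : Matrix (Fin 2) (Fin 2) ℝ :=
  !![pdx (fun r => pdx g r) α, pdx (fun r => pdy g r) α;
     pdy (fun r => pdx g r) α, pdy (fun r => pdy g r) α]

/-- The upper-left 2×2 block of an `n×n` matrix family (`2 < n`). -/
def topBlock {n : ℕ} (hn : 2 < n) (C : ℝ × ℝ → Matrix (Fin n) (Fin n) ℝ) :
    ℝ × ℝ → Matrix (Fin 2) (Fin 2) ℝ := fun r =>
  !![C r ⟨0, by omega⟩ ⟨0, by omega⟩, C r ⟨0, by omega⟩ ⟨1, by omega⟩;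
     C r ⟨1, by omega⟩ ⟨0, by omega⟩, C r ⟨1, by omega⟩ ⟨1, by omega⟩]

/-!
Write `F_v` for the target map in an orthonormal eigenframe `v` of `A(r)`. It is linear in the
matrix and `F_v(A(r)) = (λ₁(r) - λ₂(r), 0)`, so Taylor expansion at `r` turns the Newton equation
into `J_r (r_{i+1} - α) = -F_v(A(α)) + O(|r - α|²)`. The frame `v` need not converge as `r → α`, but
Weyl's inequality gives `‖(A(α) - λ) v‖ = O(|r - α|)` with `λ = λ₁(α) = λ₂(α)`. A symmetric `B`
satisfies `|⟪x, B y⟫| ≤ K ‖B x‖ ‖B y‖`; since `F_v` kills multiples of the identity, taking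
`B = A(α) - λ` gives `F_v(A(α)) = O(|r - α|²)`. Finally `J_r` has a uniformly bounded inverse: `v`
approaches the compact set of orthonormal bases of the degenerate eigenspace, and the kernel of
the Jacobian at `α` is the same for all of them, because the squared length of `F_v(S)` is the
discriminant of the compression of `S`.
-/

open Filter Topology Asymptotics
open scoped RealInnerProductSpace

section Spectrum

variable {ι κ H : Type*} [Fintype ι] [NormedAddCommGroup H] [InnerProductSpace ℝ H]

/-- `l` lists the eigenvalues of `T` in increasing order, with multiplicity: this is how the
functions `λ₁ ≤ λ₂ ≤ ⋯` enter the argument. Symmetry of `T` is encoded by the orthonormal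
eigenbasis. -/
structure HasOrderedEigenvalues [LinearOrder ι] (T : H →L[ℝ] H) (l : ι → ℝ) : Prop where
  monotone : Monotone l
  exists_eigenbasis : ∃ b : OrthonormalBasis ι ℝ H, ∀ i, T (b i) = l i • b i

/-- `v` is an orthonormal family of eigenvectors of `T` with eigenvalues `μ`; the Newton step is
computed in such a family with two members. -/
structure IsOrthonormalEigenfamily (T : H →L[ℝ] H) (μ : κ → ℝ) (v : κ → H) : Prop where
  orthonormal : Orthonormal ℝ v
  apply_eq : ∀ i, T (v i) = μ i • v i

section Eigenbasis

variable {b : OrthonormalBasis ι ℝ H} {T : H →L[ℝ] H} {l : ι → ℝ}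

lemma inner_apply_eq_sum (hb : ∀ i, T (b i) = l i • b i) (x y : H) :
    ⟪x, T y⟫ = ∑ i, l i * (⟪b i, x⟫ * ⟪b i, y⟫) := by
  conv_lhs => rw [← b.sum_repr' y]
  simp only [map_sum, map_smul, hb, inner_sum, inner_smul_right, real_inner_comm x]
  exact Finset.sum_congr rfl fun i _ => by ring

lemma isSymmetric_of_eigenbasis (hb : ∀ i, T (b i) = l i • b i) :
    (T : H →ₗ[ℝ] H).IsSymmetric := fun x y => by
  rw [ContinuousLinearMap.coe_coe, real_inner_comm, inner_apply_eq_sum hb, inner_apply_eq_sum hb]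
  exact Finset.sum_congr rfl fun i _ => by ring

lemma mul_norm_sq_le_inner_apply (hb : ∀ i, T (b i) = l i • b i) {c : ℝ} {x : H}
    (hx : ∀ i, l i < c → ⟪b i, x⟫ = 0) : c * ‖x‖ ^ 2 ≤ ⟪x, T x⟫ := by
  rw [inner_apply_eq_sum hb, ← b.sum_sq_inner_right, Finset.mul_sum]
  refine Finset.sum_le_sum fun i _ => ?_
  rcases lt_or_ge (l i) c with hi | hi
  · simp [hx i hi]
  · rw [← sq]
    gcongr

lemma inner_apply_le_mul_norm_sq (hb : ∀ i, T (b i) = l i • b i) {c : ℝ} {x : H}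
    (hx : ∀ i, c < l i → ⟪b i, x⟫ = 0) : ⟪x, T x⟫ ≤ c * ‖x‖ ^ 2 := by
  have hneg : ∀ i, (-T) (b i) = (-l i) • b i := fun i => by simp [hb]
  have h := mul_norm_sq_le_inner_apply hneg (c := -c) fun i hi => hx i (neg_lt_neg_iff.mp hi)
  rw [_root_.neg_apply, inner_neg_right] at h
  linarith

lemma mem_span_range_of_apply_eq_smul [Finite κ] (hb : ∀ i, T (b i) = l i • b i) {e : κ → ι}
    {c : ℝ} (he : ∀ i, l i = c → i ∈ Set.range e) {w : κ → H}
    (hw : IsOrthonormalEigenfamily T (fun _ => c) w) {x : H} (hx : T x = c • x) :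
    x ∈ Submodule.span ℝ (Set.range w) := by
  cases nonempty_fintype κ
  have : FiniteDimensional ℝ H := b.toBasis.finiteDimensional_of_finite
  have hle : ∀ y, T y = c • y → y ∈ Submodule.span ℝ (Set.range (b ∘ e)) := fun y hy => by
    rw [← b.sum_repr' y]
    refine Submodule.sum_mem _ fun i _ => ?_
    by_cases hi : l i = c
    · obtain ⟨j, rfl⟩ := he i hi
      exact Submodule.smul_mem _ _ (Submodule.subset_span ⟨j, rfl⟩)
    · have hsymm : ⟪T (b i), y⟫ = ⟪b i, T y⟫ := isSymmetric_of_eigenbasis hb (b i) y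
      rw [hb, hy, real_inner_smul_left, real_inner_smul_right] at hsymm
      rw [(mul_eq_mul_right_iff.mp hsymm).resolve_left hi, zero_smul]
      exact Submodule.zero_mem _
  have hspan : Submodule.span ℝ (Set.range w) = Submodule.span ℝ (Set.range (b ∘ e)) := by
    refine Submodule.eq_of_le_of_finrank_le ?_ ?_
    · rw [Submodule.span_le]
      rintro _ ⟨i, rfl⟩
      exact hle _ (hw.apply_eq i)
    · rw [finrank_span_eq_card hw.orthonormal.linearIndependent]
      exact finrank_range_le_card _
  exact hspan ▸ hle x hx

end Eigenbasis

lemma exists_ne_zero_forall_eq_zero [FiniteDimensional ℝ H] (f : ι → H →ₗ[ℝ] ℝ)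
    (hcard : Fintype.card ι < Module.finrank ℝ H) : ∃ x ≠ 0, ∀ i, f i x = 0 := by
  have hker : (LinearMap.pi f).ker ≠ ⊥ :=
    LinearMap.ker_ne_bot_of_finrank_lt (by rwa [Module.finrank_fintype_fun_eq_card])
  obtain ⟨x, hx, hx0⟩ := Submodule.exists_mem_ne_zero_of_ne_bot hker
  exact ⟨x, hx0, congrFun hx⟩

namespace HasOrderedEigenvalues

variable [LinearOrder ι] {T T' : H →L[ℝ] H} {l l' : ι → ℝ}

lemma isSymmetric (h : HasOrderedEigenvalues T l) : (T : H →ₗ[ℝ] H).IsSymmetric := by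
  obtain ⟨b, hb⟩ := h.exists_eigenbasis
  exact isSymmetric_of_eigenbasis hb

-- Courant-Fischer: some `x ≠ 0` is orthogonal to the eigenvectors of `T` below the index `k` and
-- to those of `T'` above it, since these are only `card ι - 1` conditions.
lemma le_add_norm_sub (h : HasOrderedEigenvalues T l) (h' : HasOrderedEigenvalues T' l') (k : ι) :
    l k ≤ l' k + ‖T - T'‖ := by
  obtain ⟨b, hb⟩ := h.exists_eigenbasis
  obtain ⟨b', hb'⟩ := h'.exists_eigenbasis
  have : FiniteDimensional ℝ H := b.toBasis.finiteDimensional_of_finite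
  obtain ⟨x, hx0, hx⟩ := exists_ne_zero_forall_eq_zero
    (fun j : {j // j ≠ k} => (innerₛₗ ℝ (if (j : ι) < k then b j else b' j) : H →ₗ[ℝ] ℝ))
    ((Fintype.card_subtype_lt (x := k) (by simp)).trans_eq
      (Module.finrank_eq_card_basis b.toBasis).symm)
  have hlower : l k * ‖x‖ ^ 2 ≤ ⟪x, T x⟫ := mul_norm_sq_le_inner_apply hb fun j hj => by
    have hjk := h.monotone.reflect_lt hj
    simpa [hjk] using hx ⟨j, hjk.ne⟩
  have hupper : ⟪x, T' x⟫ ≤ l' k * ‖x‖ ^ 2 := inner_apply_le_mul_norm_sq hb' fun j hj => by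
    have hkj := h'.monotone.reflect_lt hj
    simpa [hkj.not_gt] using hx ⟨j, hkj.ne'⟩
  have hdiff : ⟪x, (T - T') x⟫ ≤ ‖T - T'‖ * ‖x‖ ^ 2 := calc
    ⟪x, (T - T') x⟫ ≤ ‖x‖ * ‖(T - T') x‖ := real_inner_le_norm _ _
    _ ≤ ‖x‖ * (‖T - T'‖ * ‖x‖) := by gcongr; exact (T - T').le_opNorm x
    _ = ‖T - T'‖ * ‖x‖ ^ 2 := by ring
  rw [_root_.sub_apply, inner_sub_right] at hdiff
  have hpos : 0 < ‖x‖ ^ 2 := pow_pos (norm_pos_iff.mpr hx0) 2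
  refine le_of_mul_le_mul_right ?_ hpos
  linarith

theorem abs_sub_le_norm_sub (h : HasOrderedEigenvalues T l) (h' : HasOrderedEigenvalues T' l')
    (k : ι) : |l k - l' k| ≤ ‖T - T'‖ := by
  have hle := h.le_add_norm_sub h' k
  have hge := h'.le_add_norm_sub h k
  rw [norm_sub_rev] at hge
  exact abs_sub_le_iff.mpr ⟨by linarith, by linarith⟩

lemma norm_apply_sub_smul_le (h : HasOrderedEigenvalues T l) (h' : HasOrderedEigenvalues T' l')
    {k : ι} {v : H} (hv : T v = l k • v) : ‖T' v - l' k • v‖ ≤ 2 * ‖T - T'‖ * ‖v‖ := calc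
  ‖T' v - l' k • v‖ = ‖(l k - l' k) • v - (T - T') v‖ := by
    rw [_root_.sub_apply, hv, sub_smul]
    congr 1
    abel
  _ ≤ |l k - l' k| * ‖v‖ + ‖(T - T') v‖ := by
    rw [← Real.norm_eq_abs, ← norm_smul]
    exact norm_sub_le _ _
  _ ≤ ‖T - T'‖ * ‖v‖ + ‖T - T'‖ * ‖v‖ := by
    gcongr
    · exact h.abs_sub_le_norm_sub h' k
    · exact (T - T').le_opNorm v
  _ = 2 * ‖T - T'‖ * ‖v‖ := by ring

end HasOrderedEigenvalues

end Spectrum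

section TargetMap

variable {κ H : Type*} [NormedAddCommGroup H] [InnerProductSpace ℝ H]

/-- The compression `(⟪vᵢ, T vⱼ⟫)` of `T` to the family `v`; for orthonormal `v` it represents the
part of `T` acting on the span of `v`. -/
def compression (v : κ → H) (T : H →L[ℝ] H) : Matrix κ κ ℝ :=
  Matrix.of fun i j => ⟪v i, T (v j)⟫

/-- The paper's target map `F` in the frame `v`, as a linear function of the operator: composed
with a family of operators it gives `F(A^p)`, and composed with the derivative of the family it
gives the Jacobian `J_r(A^p)`. -/
def targetMap (v : Fin 2 → H) : (H →L[ℝ] H) →L[ℝ] ℝ × ℝ :=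
  let entry (i j : Fin 2) : (H →L[ℝ] H) →L[ℝ] ℝ :=
    innerSL ℝ (v i) ∘L ContinuousLinearMap.apply ℝ H (v j)
  (entry 0 0 - entry 1 1).prod ((2 : ℝ) • entry 0 1)

lemma targetMap_apply (v : Fin 2 → H) (T : H →L[ℝ] H) :
    targetMap v T = (⟪v 0, T (v 0)⟫ - ⟪v 1, T (v 1)⟫, 2 * ⟪v 0, T (v 1)⟫) := rfl

lemma IsOrthonormalEigenfamily.targetMap_eq {T : H →L[ℝ] H} {μ : Fin 2 → ℝ} {v : Fin 2 → H}
    (hv : IsOrthonormalEigenfamily T μ v) : targetMap v T = (μ 0 - μ 1, 0) := by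
  simp [targetMap_apply, hv.apply_eq, inner_smul_right, hv.orthonormal.1,
    hv.orthonormal.2 zero_ne_one]

lemma targetMap_smul_id {v : Fin 2 → H} (hv : Orthonormal ℝ v) (c : ℝ) :
    targetMap v (c • ContinuousLinearMap.id ℝ H) = 0 := by
  have heigen : IsOrthonormalEigenfamily (c • ContinuousLinearMap.id ℝ H) (fun _ => c) v :=
    ⟨hv, fun _ => rfl⟩
  rw [heigen.targetMap_eq, sub_self, Prod.mk_zero_zero]

lemma norm_targetMap_le {v : Fin 2 → H} {T : H →L[ℝ] H} {ρ : ℝ}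
    (h : ∀ i j, |⟪v i, T (v j)⟫| ≤ ρ) : ‖targetMap v T‖ ≤ 2 * ρ := by
  rw [targetMap_apply, Prod.norm_mk, Real.norm_eq_abs, Real.norm_eq_abs, abs_mul, abs_two]
  refine max_le ((abs_sub _ _).trans ?_) ?_
  · linarith [h 0 0, h 1 1]
  · linarith [h 0 1]

lemma norm_targetMap_le_opNorm {v : Fin 2 → H} (hv : Orthonormal ℝ v) (T : H →L[ℝ] H) :
    ‖targetMap v T‖ ≤ 2 * ‖T‖ :=
  norm_targetMap_le fun i j => calc
    |⟪v i, T (v j)⟫| ≤ ‖v i‖ * ‖T (v j)‖ := abs_real_inner_le_norm _ _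
    _ ≤ 1 * (‖T‖ * 1) := by
      rw [hv.1 i]
      gcongr
      exact (T.le_opNorm _).trans_eq (by rw [hv.1 j])
    _ = ‖T‖ := by ring

lemma norm_targetMap_apply_le_add {E : Type*} [NormedAddCommGroup E] [NormedSpace ℝ E]
    {v : Fin 2 → H} (hv : Orthonormal ℝ v) (L L' : E →L[ℝ] H →L[ℝ] H) (h : E) :
    ‖targetMap v (L h)‖ ≤ ‖targetMap v (L' h)‖ + 2 * ‖L' - L‖ * ‖h‖ := calc
  ‖targetMap v (L h)‖ = ‖targetMap v (L' h) - targetMap v ((L' - L) h)‖ := by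
    rw [← map_sub, _root_.sub_apply, sub_sub_cancel]
  _ ≤ ‖targetMap v (L' h)‖ + ‖targetMap v ((L' - L) h)‖ := norm_sub_le _ _
  _ ≤ ‖targetMap v (L' h)‖ + 2 * ‖(L' - L) h‖ := by
    gcongr
    exact norm_targetMap_le_opNorm hv _
  _ ≤ ‖targetMap v (L' h)‖ + 2 * (‖L' - L‖ * ‖h‖) := by
    gcongr
    exact (L' - L).le_opNorm h
  _ = ‖targetMap v (L' h)‖ + 2 * ‖L' - L‖ * ‖h‖ := by rw [mul_assoc]

lemma charpoly_compression_eq [Fintype κ] [DecidableEq κ] {u v : κ → H} (hu : Orthonormal ℝ u)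
    (hv : Orthonormal ℝ v) (hspan : ∀ i, v i ∈ Submodule.span ℝ (Set.range u)) (T : H →L[ℝ] H) :
    (compression v T).charpoly = (compression u T).charpoly := by
  choose Q hQ using fun i => (Submodule.mem_span_range_iff_exists_fun ℝ).mp (hspan i)
  have hconj : compression v T = Matrix.of Q * compression u T * (Matrix.of Q)ᵀ := by
    ext i j
    simp only [compression, of_apply, ← hQ, map_sum, map_smul, sum_inner, inner_sum,
      real_inner_smul_left, real_inner_smul_right, Matrix.mul_apply, transpose_apply,
      Finset.sum_mul]
    exact Finset.sum_congr rfl fun _ _ => Finset.sum_congr rfl fun _ _ => by ring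
  have horth : Matrix.of Q * (Matrix.of Q)ᵀ = 1 := by
    ext i j
    rw [Matrix.one_apply, ← orthonormal_iff_ite.mp hv i j, ← hQ i, ← hQ j, hu.inner_sum]
    simp [Matrix.mul_apply]
  rw [hconj, Matrix.charpoly_mul_comm, ← Matrix.mul_assoc, mul_eq_one_comm.mp horth,
    Matrix.one_mul]

lemma targetMap_eq_zero_iff_discr_eq_zero {T : H →L[ℝ] H} (hT : (T : H →ₗ[ℝ] H).IsSymmetric)
    (v : Fin 2 → H) : targetMap v T = 0 ↔ (compression v T).discr = 0 := by
  have hsymm : ⟪v 1, T (v 0)⟫ = ⟪v 0, T (v 1)⟫ := by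
    rw [real_inner_comm]
    exact hT (v 0) (v 1)
  have hdiscr : (compression v T).discr = (targetMap v T).1 ^ 2 + (targetMap v T).2 ^ 2 := by
    simp only [discr_fin_two, trace_fin_two, det_fin_two, compression, of_apply, targetMap_apply,
      hsymm]
    ring
  rw [hdiscr, Prod.ext_iff, add_eq_zero_iff_of_nonneg (sq_nonneg _) (sq_nonneg _)]
  simp

lemma targetMap_eq_zero_iff_of_mem_span {T : H →L[ℝ] H} (hT : (T : H →ₗ[ℝ] H).IsSymmetric)
    {u v : Fin 2 → H} (hu : Orthonormal ℝ u) (hv : Orthonormal ℝ v)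
    (hspan : ∀ i, v i ∈ Submodule.span ℝ (Set.range u)) :
    targetMap v T = 0 ↔ targetMap u T = 0 := by
  rw [targetMap_eq_zero_iff_discr_eq_zero hT, targetMap_eq_zero_iff_discr_eq_zero hT,
    Matrix.discr, Matrix.discr, charpoly_compression_eq hu hv hspan]

end TargetMap

section FiniteDimensional

variable {κ E H : Type*} [NormedAddCommGroup E] [NormedSpace ℝ E] [NormedAddCommGroup H]
  [InnerProductSpace ℝ H] [FiniteDimensional ℝ H]

-- With `s` a linear right inverse of `B` on its range, `⟪x, B y⟫ = ⟪x, B s B y⟫ = ⟪B x, s B y⟫`.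
lemma exists_abs_inner_apply_le {B : H →L[ℝ] H} (hB : (B : H →ₗ[ℝ] H).IsSymmetric) :
    ∃ K, 0 ≤ K ∧ ∀ x y, |⟪x, B y⟫| ≤ K * (‖B x‖ * ‖B y‖) := by
  obtain ⟨s, hs⟩ := (B : H →ₗ[ℝ] H).rangeRestrict.exists_rightInverse_of_surjective
    (LinearMap.range_rangeRestrict _)
  refine ⟨‖s.toContinuousLinearMap‖, s.toContinuousLinearMap.opNorm_nonneg, fun x y => ?_⟩
  set z := (B : H →ₗ[ℝ] H).rangeRestrict y
  have hsz : B (s z) = B y := congrArg Subtype.val (LinearMap.congr_fun hs z)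
  calc |⟪x, B y⟫| = |⟪B x, s z⟫| := by rw [← hsz]; exact congrArg _ (hB x (s z)).symm
    _ ≤ ‖B x‖ * ‖s z‖ := abs_real_inner_le_norm _ _
    _ ≤ ‖B x‖ * (‖s.toContinuousLinearMap‖ * ‖B y‖) := by
      gcongr
      exact s.toContinuousLinearMap.le_opNorm z
    _ = ‖s.toContinuousLinearMap‖ * (‖B x‖ * ‖B y‖) := by ring

lemma isCompact_setOf_orthonormal [Finite κ] : IsCompact {v : κ → H | Orthonormal ℝ v} := by
  classical
  cases nonempty_fintype κ
  refine Metric.isCompact_of_isClosed_isBounded ?_ ?_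
  · simp only [orthonormal_iff_ite, Set.ofPred_forall]
    exact isClosed_iInter fun i => isClosed_iInter fun j =>
      isClosed_eq (by fun_prop) continuous_const
  · refine (Metric.isBounded_closedBall (x := 0) (r := 1)).subset fun v hv => ?_
    rw [mem_closedBall_zero_iff, pi_norm_le_iff_of_nonneg zero_le_one]
    exact fun i => (hv.1 i).le

lemma exists_pos_mul_norm_le_norm_targetMap_add [FiniteDimensional ℝ E]
    {L : E →L[ℝ] H →L[ℝ] H} (hL : ∀ h, (L h : H →ₗ[ℝ] H).IsSymmetric) {B : H →L[ℝ] H}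
    {w : Fin 2 → H} (hw : Orthonormal ℝ w)
    (hker : ∀ x, B x = 0 → x ∈ Submodule.span ℝ (Set.range w))
    (hinj : ∀ h, targetMap w (L h) = 0 → h = 0) :
    ∃ κ > 0, ∀ v, Orthonormal ℝ v →
      ∀ h, κ * ‖h‖ ≤ ‖targetMap v (L h)‖ + (∑ i, ‖B (v i)‖) * ‖h‖ := by
  have hcont : Continuous fun z : E × (Fin 2 → H) =>
      ‖targetMap z.2 (L z.1)‖ + ∑ i, ‖B (z.2 i)‖ := by
    simp only [targetMap_apply]
    fun_prop
  have hpos : ∀ z ∈ Metric.sphere (0 : E) 1 ×ˢ {v : Fin 2 → H | Orthonormal ℝ v},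
      0 < ‖targetMap z.2 (L z.1)‖ + ∑ i, ‖B (z.2 i)‖ := by
    rintro ⟨h, v⟩ ⟨hh, hv : Orthonormal ℝ v⟩
    refine (by positivity : (0 : ℝ) ≤ _).lt_of_ne' fun hzero => ?_
    obtain ⟨htarget, hB⟩ :=
      (add_eq_zero_iff_of_nonneg (norm_nonneg _) (by positivity)).mp hzero
    have hBv : ∀ i, B (v i) = 0 := fun i => norm_eq_zero.mp <|
      (Finset.sum_eq_zero_iff_of_nonneg fun _ _ => norm_nonneg _).mp hB i (Finset.mem_univ i)
    have hh0 : h = 0 := hinj h <| (targetMap_eq_zero_iff_of_mem_span (hL h) hw hv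
      fun i => hker _ (hBv i)).mp (norm_eq_zero.mp htarget)
    exact ne_zero_of_mem_unit_sphere ⟨h, hh⟩ hh0
  obtain ⟨κ, hκ, hmin⟩ := ((isCompact_sphere (0 : E) 1).prod isCompact_setOf_orthonormal)
    |>.exists_forall_le' hcont.continuousOn hpos
  refine ⟨κ, hκ, fun v hv h => ?_⟩
  obtain rfl | hh := eq_or_ne h 0
  · simp
  have hunit := hmin (‖h‖⁻¹ • h, v) ⟨by simp [norm_smul, hh], hv⟩
  simp only [map_smul, norm_smul, norm_inv, norm_norm] at hunit
  calc κ * ‖h‖ ≤ (‖h‖⁻¹ * ‖targetMap v (L h)‖ + ∑ i, ‖B (v i)‖) * ‖h‖ := by gcongr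
    _ = ‖targetMap v (L h)‖ + (∑ i, ‖B (v i)‖) * ‖h‖ := by field_simp

end FiniteDimensional

section Calculus

variable {E F H : Type*} [NormedAddCommGroup E] [NormedSpace ℝ E] [NormedAddCommGroup F]
  [NormedSpace ℝ F] [NormedAddCommGroup H] [InnerProductSpace ℝ H] [FiniteDimensional ℝ H]

lemma isSymmetric_fderiv {T : E → H →L[ℝ] H} {a : E}
    (hT : ∀ᶠ p in 𝓝 a, (T p : H →ₗ[ℝ] H).IsSymmetric) (v : E) :
    (fderiv ℝ T a v : H →ₗ[ℝ] H).IsSymmetric := by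
  have := FiniteDimensional.complete ℝ H
  simp only [← ContinuousLinearMap.isSelfAdjoint_iff_isSymmetric] at hT ⊢
  have hstar : (fun p => star (T p)) =ᶠ[𝓝 a] T := hT
  have hfderiv := (fderiv_star (𝕜 := ℝ) (f := T)).symm.trans hstar.fderiv_eq
  exact DFunLike.congr_fun hfderiv v

lemma isBigO_sub_fderiv_of_contDiffAt {f : E → F} {a : E} (hf : ContDiffAt ℝ 2 f a) :
    (fun r => f a - f r - fderiv ℝ f r (a - r)) =O[𝓝 a] fun r => ‖r - a‖ ^ 2 := by
  obtain ⟨K, U, hU, hLip⟩ :=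
    (hf.fderiv_right (m := 1) (by norm_num)).exists_lipschitzOnWith
  have hdiff : ∀ᶠ p in 𝓝 a, DifferentiableAt ℝ f p :=
    (hf.eventually (by simp)).mono fun p hp => hp.differentiableAt (by norm_num)
  obtain ⟨ε, hε, hball⟩ := Metric.eventually_nhds_iff_ball.mp (hdiff.and hU)
  refine IsBigO.of_bound K ?_
  filter_upwards [Metric.ball_mem_nhds a hε] with r hr
  have hsub : segment ℝ r a ⊆ Metric.ball a ε :=
    (convex_ball a ε).segment_subset hr (Metric.mem_ball_self hε)
  have hbound : ∀ p ∈ segment ℝ r a, ‖fderiv ℝ f p - fderiv ℝ f r‖ ≤ K * ‖r - a‖ := fun p hp => by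
    refine (hLip.norm_sub_le (hball p (hsub hp)).2 (hball r hr).2).trans ?_
    gcongr
    simpa [norm_sub_rev] using norm_sub_le_of_mem_segment hp
  have htaylor := (convex_segment r a).norm_image_sub_le_of_norm_hasFDerivWithin_le'
    (fun p hp => (hball p (hsub hp)).1.hasFDerivAt.hasFDerivWithinAt) hbound
    (left_mem_segment ℝ r a) (right_mem_segment ℝ r a)
  rw [norm_pow, norm_norm]
  exact htaylor.trans_eq (by rw [norm_sub_rev a r]; ring)

end Calculus

section Perturbation

variable {ι H : Type*} [Fintype ι] [LinearOrder ι] [NormedAddCommGroup H] [InnerProductSpace ℝ H]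
  {T : H →L[ℝ] H} {l : ι → ℝ} {e : Fin 2 → ι} {c : ℝ}

lemma HasOrderedEigenvalues.norm_shift_apply_le {κ : Type*} {e : κ → ι}
    (hT : HasOrderedEigenvalues T l) (he : ∀ i, l (e i) = c) {T' : H →L[ℝ] H} {l' : ι → ℝ}
    (hT' : HasOrderedEigenvalues T' l') {v : κ → H}
    (hv : IsOrthonormalEigenfamily T' (l' ∘ e) v) (i : κ) :
    ‖(T - c • ContinuousLinearMap.id ℝ H) (v i)‖ ≤ 2 * ‖T' - T‖ := by
  simpa [he, hv.orthonormal.1] using hT'.norm_apply_sub_smul_le hT (hv.apply_eq i)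

lemma HasOrderedEigenvalues.exists_norm_targetMap_le (hT : HasOrderedEigenvalues T l)
    (he : ∀ i, l (e i) = c) :
    ∃ K, 0 ≤ K ∧ ∀ T' l', HasOrderedEigenvalues T' l' → ∀ v,
      IsOrthonormalEigenfamily T' (l' ∘ e) v → ‖targetMap v T‖ ≤ K * ‖T' - T‖ ^ 2 := by
  obtain ⟨b, hb⟩ := hT.exists_eigenbasis
  have : FiniteDimensional ℝ H := b.toBasis.finiteDimensional_of_finite
  set B := T - c • ContinuousLinearMap.id ℝ H
  have hB : (B : H →ₗ[ℝ] H).IsSymmetric :=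
    isSymmetric_of_eigenbasis (l := fun i => l i - c) (b := b) fun i => by simp [B, hb, sub_smul]
  obtain ⟨K, hK, hinner⟩ := exists_abs_inner_apply_le hB
  refine ⟨8 * K, by positivity, fun T' l' hT' v hv => ?_⟩
  have hBv := hT.norm_shift_apply_le he hT' hv
  have hshift : targetMap v T = targetMap v B := by
    rw [map_sub, targetMap_smul_id hv.orthonormal, sub_zero]
  rw [hshift]
  calc ‖targetMap v B‖ ≤ 2 * (K * ((2 * ‖T' - T‖) * (2 * ‖T' - T‖))) :=
        norm_targetMap_le fun i j => (hinner _ _).trans <| by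
          gcongr
          · exact hBv i
          · exact hBv j
    _ = 8 * K * ‖T' - T‖ ^ 2 := by ring

end Perturbation

section NewtonStep

variable {ι E H : Type*} [Fintype ι] [LinearOrder ι] [NormedAddCommGroup E] [NormedSpace ℝ E]
  [NormedAddCommGroup H] [InnerProductSpace ℝ H] {T : E → H →L[ℝ] H} {l : E → ι → ℝ} {α : E}
  {e : Fin 2 → ι} {c : ℝ}

lemma exists_norm_targetMap_fderiv_sub_le (hT : ContDiffAt ℝ 2 T α)
    (hl : ∀ᶠ r in 𝓝 α, HasOrderedEigenvalues (T r) (l r)) (he : ∀ i, l α (e i) = c) :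
    ∃ C, 0 ≤ C ∧ ∀ᶠ r in 𝓝 α, ∀ v, IsOrthonormalEigenfamily (T r) (l r ∘ e) v →
      ‖targetMap v (fderiv ℝ T r (r - α)) - targetMap v (T r)‖ ≤ C * ‖r - α‖ ^ 2 := by
  obtain ⟨C₁, hC₁, htaylor⟩ := (isBigO_sub_fderiv_of_contDiffAt hT).exists_nonneg
  obtain ⟨C₂, hlip⟩ := (hT.differentiableAt (by norm_num)).isBigO_sub.bound
  obtain ⟨K, hK, htarget⟩ := hl.self_of_nhds.exists_norm_targetMap_le he
  refine ⟨2 * C₁ + K * C₂ ^ 2, by positivity, ?_⟩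
  filter_upwards [hl, htaylor.bound, hlip] with r hr hrem hsub v hv
  set R := T α - T r - fderiv ℝ T r (α - r)
  have hdecomp : fderiv ℝ T r (r - α) - T r = R - T α := by
    simp only [R, map_sub]
    abel
  rw [norm_pow, norm_norm] at hrem
  rw [← map_sub, hdecomp, map_sub]
  calc ‖targetMap v R - targetMap v (T α)‖ ≤ ‖targetMap v R‖ + ‖targetMap v (T α)‖ :=
        norm_sub_le _ _
    _ ≤ 2 * ‖R‖ + K * ‖T r - T α‖ ^ 2 :=
        add_le_add (norm_targetMap_le_opNorm hv.orthonormal R) (htarget _ _ hr v hv)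
    _ ≤ 2 * (C₁ * ‖r - α‖ ^ 2) + K * (C₂ * ‖r - α‖) ^ 2 := by gcongr
    _ = (2 * C₁ + K * C₂ ^ 2) * ‖r - α‖ ^ 2 := by ring

lemma exists_pos_mul_norm_le_norm_targetMap_fderiv [FiniteDimensional ℝ E]
    (hT : ContDiffAt ℝ 2 T α) (hl : ∀ᶠ r in 𝓝 α, HasOrderedEigenvalues (T r) (l r))
    (he : ∀ i, l α i = c ↔ i ∈ Set.range e) {w : Fin 2 → H}
    (hw : IsOrthonormalEigenfamily (T α) (fun _ => c) w)
    (hinj : ∀ h, targetMap w (fderiv ℝ T α h) = 0 → h = 0) :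
    ∃ κ > 0, ∀ᶠ r in 𝓝 α, ∀ v, IsOrthonormalEigenfamily (T r) (l r ∘ e) v →
      ∀ h, κ * ‖h‖ ≤ ‖targetMap v (fderiv ℝ T r h)‖ := by
  obtain ⟨b, hb⟩ := hl.self_of_nhds.exists_eigenbasis
  have : FiniteDimensional ℝ H := b.toBasis.finiteDimensional_of_finite
  obtain ⟨κ, hκ, hbelow⟩ := exists_pos_mul_norm_le_norm_targetMap_add
    (isSymmetric_fderiv (hl.mono fun _ hr => hr.isSymmetric))
    (B := T α - c • ContinuousLinearMap.id ℝ H) hw.orthonormal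
    (fun x hx => mem_span_range_of_apply_eq_smul hb (fun i => (he i).mp) hw
      (by simpa [sub_eq_zero] using hx)) hinj
  have hTcont := tendsto_iff_norm_sub_tendsto_zero.mp hT.continuousAt.tendsto
  have hfderiv := tendsto_iff_norm_sub_tendsto_zero.mp
    (hT.fderiv_right (m := 1) (by norm_num)).continuousAt.tendsto
  have hsmall : ∀ᶠ r in 𝓝 α, 4 * ‖T r - T α‖ + 2 * ‖fderiv ℝ T r - fderiv ℝ T α‖ < κ / 2 :=
    ((hTcont.const_mul 4).add (hfderiv.const_mul 2)).eventually_lt_const (by simpa using hκ)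
  refine ⟨κ / 2, by positivity, ?_⟩
  filter_upwards [hl, hsmall] with r hr hrsmall v hv h
  have hBv : ∑ i, ‖(T α - c • ContinuousLinearMap.id ℝ H) (v i)‖ ≤ 4 * ‖T r - T α‖ := by
    have hshift := hl.self_of_nhds.norm_shift_apply_le (fun i => (he _).mpr ⟨i, rfl⟩) hr hv
    rw [Fin.sum_univ_two]
    linarith [hshift 0, hshift 1]
  have hlower := (hbelow v hv.orthonormal h).trans <| add_le_add
    (norm_targetMap_apply_le_add hv.orthonormal (fderiv ℝ T α) (fderiv ℝ T r) h)
    (mul_le_mul_of_nonneg_right hBv (norm_nonneg h))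
  linarith [mul_le_mul_of_nonneg_right hrsmall.le (norm_nonneg h)]

theorem exists_eventually_norm_sub_le_of_fderiv_targetMap_eq [FiniteDimensional ℝ E]
    (hT : ContDiffAt ℝ 2 T α) (hl : ∀ᶠ r in 𝓝 α, HasOrderedEigenvalues (T r) (l r))
    (he : ∀ i, l α i = c ↔ i ∈ Set.range e) {w : Fin 2 → H}
    (hw : IsOrthonormalEigenfamily (T α) (fun _ => c) w)
    (hinj : ∀ h, targetMap w (fderiv ℝ T α h) = 0 → h = 0) :
    ∃ C > 0, ∀ᶠ r in 𝓝 α, ∀ v, IsOrthonormalEigenfamily (T r) (l r ∘ e) v →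
      (∀ h, targetMap v (fderiv ℝ T r h) = 0 → h = 0) ∧
      ∀ h, targetMap v (fderiv ℝ T r h) = targetMap v (T r) → ‖r - h - α‖ ≤ C * ‖r - α‖ ^ 2 := by
  obtain ⟨κ, hκ, hbelow⟩ := exists_pos_mul_norm_le_norm_targetMap_fderiv hT hl he hw hinj
  obtain ⟨C, hC, habove⟩ :=
    exists_norm_targetMap_fderiv_sub_le hT hl fun i => (he _).mpr ⟨i, rfl⟩
  refine ⟨(C + 1) / κ, by positivity, ?_⟩
  filter_upwards [hbelow, habove] with r hr hr' v hv
  refine ⟨fun h hh => ?_, fun h hh => ?_⟩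
  · have hzero := hr v hv h
    rw [hh, norm_zero] at hzero
    exact norm_le_zero_iff.mp (nonpos_of_mul_nonpos_right hzero hκ)
  · rw [div_mul_eq_mul_div, le_div_iff₀' hκ, sub_right_comm]
    calc κ * ‖r - α - h‖ ≤ ‖targetMap v (fderiv ℝ T r (r - α - h))‖ := hr v hv _
      _ = ‖targetMap v (fderiv ℝ T r (r - α)) - targetMap v (T r)‖ := by
        rw [map_sub, map_sub, hh]
      _ ≤ C * ‖r - α‖ ^ 2 := hr' v hv
      _ ≤ (C + 1) * ‖r - α‖ ^ 2 := by gcongr; linarith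

end NewtonStep

section JacobianMatrix

lemma mulVec2_mulVec2_inv {M : Matrix (Fin 2) (Fin 2) ℝ} (hM : M.det ≠ 0) (y : ℝ × ℝ) :
    mulVec2 M (mulVec2 M⁻¹ y) = y := by
  have hmul : ∀ N, mulVec2 M (mulVec2 N y) = mulVec2 (M * N) y := fun N => by
    ext <;> simp [mulVec2, Matrix.mul_apply, Fin.sum_univ_two] <;> ring
  rw [hmul, Matrix.mul_nonsing_inv M hM.isUnit]
  simp [mulVec2]

lemma det_ne_zero_iff_forall_mulVec2 {M : Matrix (Fin 2) (Fin 2) ℝ} :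
    M.det ≠ 0 ↔ ∀ h, mulVec2 M h = 0 → h = 0 := by
  have hmulVec : ∀ x, M *ᵥ x = 0 ↔ mulVec2 M (x 0, x 1) = 0 := fun x => by
    simp [mulVec2, funext_iff, Prod.ext_iff, Fin.forall_fin_two]
  rw [← not_iff_not, not_not, ← exists_mulVec_eq_zero_iff]
  push Not
  refine ⟨fun ⟨x, hx, hMx⟩ => ⟨(x 0, x 1), (hmulVec x).mp hMx, ?_⟩,
    fun ⟨h, hMh, hh⟩ => ⟨![h.1, h.2], ?_, (hmulVec _).mpr hMh⟩⟩
  · simpa [funext_iff, Prod.ext_iff, Fin.forall_fin_two] using hx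
  · simpa [funext_iff, Prod.ext_iff, Fin.forall_fin_two] using hh

lemma mulVec2_Jmat {S : ℝ × ℝ → Matrix (Fin 2) (Fin 2) ℝ} {r : ℝ × ℝ}
    (hS : DifferentiableAt ℝ (Ftar S) r) (h : ℝ × ℝ) :
    mulVec2 (Jmat S r) h = fderiv ℝ (Ftar S) r h := by
  have hfst : fderiv ℝ (fun p => S p 0 0 - S p 1 1) r =
      ContinuousLinearMap.fst ℝ ℝ ℝ ∘L fderiv ℝ (Ftar S) r := hS.hasFDerivAt.fst.fderiv
  have hsnd : fderiv ℝ (fun p => 2 * S p 0 1) r =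
      ContinuousLinearMap.snd ℝ ℝ ℝ ∘L fderiv ℝ (Ftar S) r := hS.hasFDerivAt.snd.fderiv
  have hh : h = h.1 • ((1, 0) : ℝ × ℝ) + h.2 • ((0, 1) : ℝ × ℝ) := by ext <;> simp
  conv_rhs => rw [hh, map_add, map_smul, map_smul]
  ext <;> simp [mulVec2, Jmat, pdx, pdy, hfst, hsnd] <;> ring

end JacobianMatrix

section EuclideanMatrix

variable {m : Type*} [Fintype m] [DecidableEq m]

lemma contDiffAt_toEuclideanCLM {E : Type*} [NormedAddCommGroup E] [NormedSpace ℝ E]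
    {A : E → Matrix m m ℝ} {a : E} {k : WithTop ℕ∞}
    (hA : ∀ i j, ContDiffAt ℝ k (fun r => A r i j) a) :
    ContDiffAt ℝ k (fun r => toEuclideanCLM (𝕜 := ℝ) (A r)) a := by
  have hsum : ∀ r, toEuclideanCLM (𝕜 := ℝ) (A r) =
      ∑ i, ∑ j, A r i j • toEuclideanCLM (𝕜 := ℝ) (Matrix.single i j (1 : ℝ)) := fun r => by
    conv_lhs => rw [matrix_eq_sum_single (A r)]
    simp only [map_sum, ← map_smul, smul_single, smul_eq_mul, mul_one]
  simp only [hsum]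
  exact ContDiffAt.sum fun i _ => ContDiffAt.sum fun j _ => (hA i j).smul contDiffAt_const

lemma toEuclideanCLM_toLp_eq_smul {M : Matrix m m ℝ} {x : m → ℝ} {c : ℝ} (h : M *ᵥ x = c • x) :
    toEuclideanCLM (𝕜 := ℝ) M (WithLp.toLp 2 x) = c • WithLp.toLp 2 x := by
  rw [toEuclideanCLM_toLp, h, WithLp.toLp_smul]

lemma hasOrderedEigenvalues_toEuclideanCLM {k : Type*} [Fintype k] [LinearOrder k]
    {M V : Matrix k k ℝ} {l : k → ℝ} (hl : Monotone l) (hV : Vᵀ * V = 1)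
    (hM : M = V * diagonal l * Vᵀ) :
    HasOrderedEigenvalues (toEuclideanCLM (𝕜 := ℝ) M) l := by
  have hcol : Orthonormal ℝ fun j => WithLp.toLp 2 (V.col j) := by
    rw [orthonormal_iff_ite]
    intro i j
    rw [← Matrix.one_apply, ← hV, EuclideanSpace.inner_toLp_toLp, Matrix.mul_apply]
    simp [dotProduct, mul_comm]
  have hspan := hcol.linearIndependent.span_eq_top_of_card_eq_finrank' (by simp)
  refine ⟨hl, OrthonormalBasis.mk hcol hspan.ge, fun j => ?_⟩
  have hMV : M * V = V * diagonal l := by rw [hM, Matrix.mul_assoc, hV, Matrix.mul_one]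
  rw [OrthonormalBasis.coe_mk]
  refine toEuclideanCLM_toLp_eq_smul ?_
  ext i
  calc (M * V) i j = V i j * l j := by rw [hMV, Matrix.mul_diagonal]
    _ = l j * V i j := mul_comm _ _

lemma isOrthonormalEigenfamily_toEuclideanCLM {M : Matrix m m ℝ} {μ : Fin 2 → ℝ}
    {v₁ v₂ : m → ℝ} (h₁ : M *ᵥ v₁ = μ 0 • v₁) (h₂ : M *ᵥ v₂ = μ 1 • v₂)
    (h₁₁ : v₁ ⬝ᵥ v₁ = 1) (h₂₂ : v₂ ⬝ᵥ v₂ = 1) (h₁₂ : v₁ ⬝ᵥ v₂ = 0) :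
    IsOrthonormalEigenfamily (toEuclideanCLM (𝕜 := ℝ) M) μ
      ![WithLp.toLp 2 v₁, WithLp.toLp 2 v₂] := by
  constructor
  · rw [orthonormal_iff_ite]
    simp only [Fin.forall_fin_two, cons_val_zero, cons_val_one, EuclideanSpace.inner_toLp_toLp,
      star_trivial]
    simp [h₁₁, h₂₂, h₁₂, dotProduct_comm v₂]
  · exact Fin.forall_fin_two.mpr
      ⟨toEuclideanCLM_toLp_eq_smul h₁, toEuclideanCLM_toLp_eq_smul h₂⟩

end EuclideanMatrix

section EigenframeJacobian

variable {n : ℕ} {A : ℝ × ℝ → Matrix (Fin n) (Fin n) ℝ} {r : ℝ × ℝ}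

lemma Ftar_tildeA (A : ℝ × ℝ → Matrix (Fin n) (Fin n) ℝ) (v₁ v₂ : Fin n → ℝ) :
    Ftar (tildeA A v₁ v₂) = fun p =>
      targetMap ![WithLp.toLp 2 v₁, WithLp.toLp 2 v₂] (toEuclideanCLM (𝕜 := ℝ) (A p)) := by
  ext p <;> simp [Ftar, tildeA, targetMap_apply, EuclideanSpace.inner_toLp_toLp, dotProduct_comm]

lemma mulVec2_Jmat_tildeA (hA : DifferentiableAt ℝ (fun p => toEuclideanCLM (𝕜 := ℝ) (A p)) r)
    (v₁ v₂ : Fin n → ℝ) (h : ℝ × ℝ) :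
    mulVec2 (Jmat (tildeA A v₁ v₂) r) h = targetMap ![WithLp.toLp 2 v₁, WithLp.toLp 2 v₂]
      (fderiv ℝ (fun p => toEuclideanCLM (𝕜 := ℝ) (A p)) r h) := by
  let F := targetMap ![WithLp.toLp 2 v₁, WithLp.toLp 2 v₂]
  have hF := F.hasFDerivAt.comp r hA.hasFDerivAt
  have hFtar : Ftar (tildeA A v₁ v₂) = F ∘ fun p => toEuclideanCLM (𝕜 := ℝ) (A p) :=
    Ftar_tildeA A v₁ v₂
  rw [mulVec2_Jmat (hFtar ▸ hF.differentiableAt), hFtar, hF.fderiv]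
  rfl

end EigenframeJacobian

lemma apply_eq_apply_zero_iff {n : ℕ} (hn : 2 < n) {l : Fin n → ℝ} (hl : Monotone l)
    (hdeg : l ⟨0, by omega⟩ = l ⟨1, by omega⟩) (hgap : l ⟨1, by omega⟩ < l ⟨2, by omega⟩)
    (i : Fin n) : l i = l ⟨0, by omega⟩ ↔ i = ⟨0, by omega⟩ ∨ i = ⟨1, by omega⟩ := by
  refine ⟨fun hi => ?_, ?_⟩
  · have hlt : i < ⟨2, by omega⟩ := hl.reflect_lt (by rwa [hi, hdeg])
    simp only [Fin.lt_def, Fin.ext_iff] at hlt ⊢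
    omega
  · rintro (rfl | rfl)
    exacts [rfl, hdeg.symm]

theorem stmt0_general {n : ℕ}
    (A : ℝ × ℝ → Matrix (Fin n) (Fin n) ℝ) (α : ℝ × ℝ)
    (hA : ∀ i j, ContDiffAt ℝ 2 (fun r => A r i j) α)
    (lam : ℝ × ℝ → Fin n → ℝ)
    (hmono : ∀ᶠ r in 𝓝 α, Monotone (lam r))
    (heig : ∀ᶠ r in 𝓝 α, ∃ V : Matrix (Fin n) (Fin n) ℝ,
      Vᵀ * V = 1 ∧ A r = V * diagonal (lam r) * Vᵀ)
    (k₁ k₂ : Fin n)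
    (hk : ∀ i, lam α i = lam α k₁ ↔ i = k₁ ∨ i = k₂)
    (w₁ w₂ : Fin n → ℝ)
    (hw₁ : (A α).mulVec w₁ = lam α k₁ • w₁) (hw₂ : (A α).mulVec w₂ = lam α k₂ • w₂)
    (hw₁n : w₁ ⬝ᵥ w₁ = 1) (hw₂n : w₂ ⬝ᵥ w₂ = 1) (hw₁₂ : w₁ ⬝ᵥ w₂ = 0)
    (hJα : (Jmat (tildeA A w₁ w₂) α).det ≠ 0) :
    ∃ C > 0, ∀ᶠ r in 𝓝 α, ∀ v₁ v₂ : Fin n → ℝ,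
      (A r).mulVec v₁ = lam r k₁ • v₁ → (A r).mulVec v₂ = lam r k₂ • v₂ →
      v₁ ⬝ᵥ v₁ = 1 → v₂ ⬝ᵥ v₂ = 1 → v₁ ⬝ᵥ v₂ = 0 →
      (Jmat (tildeA A v₁ v₂) r).det ≠ 0 ∧
        ‖(r - mulVec2 (Jmat (tildeA A v₁ v₂) r)⁻¹ (lam r k₁ - lam r k₂, 0)) - α‖ ≤
          C * ‖r - α‖ ^ 2 := by
  have hT := contDiffAt_toEuclideanCLM hA
  have hdiff : ∀ᶠ r in 𝓝 α, DifferentiableAt ℝ (fun p => toEuclideanCLM (𝕜 := ℝ) (A p)) r :=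
    (hT.eventually (by simp)).mono fun r hr => hr.differentiableAt two_ne_zero
  have hl : ∀ᶠ r in 𝓝 α, HasOrderedEigenvalues (toEuclideanCLM (𝕜 := ℝ) (A r)) (lam r) := by
    filter_upwards [hmono, heig] with r hr ⟨V, hV, hAr⟩
    exact hasOrderedEigenvalues_toEuclideanCLM hr hV hAr
  have hw := isOrthonormalEigenfamily_toEuclideanCLM (μ := fun _ => lam α k₁) hw₁
    (by rwa [(hk k₂).mpr (.inr rfl)] at hw₂) hw₁n hw₂n hw₁₂
  have hinj := det_ne_zero_iff_forall_mulVec2.mp hJα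
  simp only [mulVec2_Jmat_tildeA hdiff.self_of_nhds] at hinj
  obtain ⟨C, hC, hstep⟩ := exists_eventually_norm_sub_le_of_fderiv_targetMap_eq hT hl
    (e := ![k₁, k₂]) (fun i => by simp [hk, or_comm]) hw hinj
  refine ⟨C, hC, ?_⟩
  filter_upwards [hdiff, hstep] with r hr hstep v₁ v₂ hv₁ hv₂ hv₁n hv₂n hv₁₂
  have hv := isOrthonormalEigenfamily_toEuclideanCLM (μ := lam r ∘ ![k₁, k₂]) hv₁ hv₂ hv₁n hv₂n hv₁₂
  obtain ⟨hzero, hquad⟩ := hstep _ hv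
  simp only [← mulVec2_Jmat_tildeA hr, hv.targetMap_eq] at hzero hquad
  have hdet := det_ne_zero_iff_forall_mulVec2.mpr hzero
  exact ⟨hdet, hquad _ (mulVec2_mulVec2_inv hdet _)⟩

/-- Theorem 1 of the paper: quadratic convergence of the
eigenvector-based Newton iteration to a non-degenerate conical point. -/
theorem stmt0 {n : ℕ} (hn : 2 < n)
    (A : ℝ × ℝ → Matrix (Fin n) (Fin n) ℝ)
    (hA : ∀ i j, ContDiff ℝ 2 fun r => A r i j)
    (hAsym : ∀ r, (A r)ᵀ = A r)
    (lam : ℝ × ℝ → Fin n → ℝ)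
    (hmono : ∀ r, Monotone (lam r))
    (heig : ∀ r, ∃ V : Matrix (Fin n) (Fin n) ℝ,
      Vᵀ * V = 1 ∧ A r = V * diagonal (lam r) * Vᵀ)
    (α : ℝ × ℝ)
    (hdeg : lam α ⟨0, by omega⟩ = lam α ⟨1, by omega⟩)
    (hgap : lam α ⟨1, by omega⟩ < lam α ⟨2, by omega⟩)
    (w₁ w₂ : Fin n → ℝ)
    (hw₁ : (A α).mulVec w₁ = lam α ⟨0, by omega⟩ • w₁)
    (hw₂ : (A α).mulVec w₂ = lam α ⟨1, by omega⟩ • w₂)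
    (hw₁n : w₁ ⬝ᵥ w₁ = 1) (hw₂n : w₂ ⬝ᵥ w₂ = 1) (hw₁₂ : w₁ ⬝ᵥ w₂ = 0)
    (hJα : (Jmat (tildeA A w₁ w₂) α).det ≠ 0) :
    ∃ Ω : Set (ℝ × ℝ), IsOpen Ω ∧ α ∈ Ω ∧ ∃ C > 0, ∀ r ∈ Ω,
      ∀ v₁ v₂ : Fin n → ℝ,
        (A r).mulVec v₁ = lam r ⟨0, by omega⟩ • v₁ →
        (A r).mulVec v₂ = lam r ⟨1, by omega⟩ • v₂ →
        v₁ ⬝ᵥ v₁ = 1 → v₂ ⬝ᵥ v₂ = 1 → v₁ ⬝ᵥ v₂ = 0 →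
        ‖(r - mulVec2 (Jmat (tildeA A v₁ v₂) r)⁻¹
            (lam r ⟨0, by omega⟩ - lam r ⟨1, by omega⟩, 0)) - α‖ ≤ C * ‖r - α‖ ^ 2 := by
  obtain ⟨C, hC, hstep⟩ := stmt0_general A α (fun i j => (hA i j).contDiffAt) lam
    (.of_forall hmono) (.of_forall heig) _ _ (apply_eq_apply_zero_iff hn (hmono α) hdeg hgap)
    w₁ w₂ hw₁ hw₂ hw₁n hw₂n hw₁₂ hJα
  obtain ⟨Ω, hΩ, hopen, hα⟩ := eventually_nhds_iff.mp hstep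
  exact ⟨Ω, hopen, hα, C, hC, fun r hr v₁ v₂ h₁ h₂ h₁n h₂n h₁₂ =>
    (hΩ r hr v₁ v₂ h₁ h₂ h₁n h₂n h₁₂).2⟩
end
end

section
/- Let A : ℝ² → ℝ^{n×n} be a C² family of real symmetric matrices with λ₁(α) = λ₂(α) < λ₃(α) at α, and let M ∈ C²(Ω, ℝ^{n×n}) be an orthogonal-matrix-valued block diagonalization M(r)ᵀA(r)M(r) = B(r) ⊕ Λ(r) on a neighborhood Ω of α, with B(r) a 2×2 symmetric matrix whose eigenvalues are λ₁(r), λ₂(r), and with the first two columns of M(α) equal to the eigenvectors v₁, v₂ used to define A^α. Then the Hessian at α of the discriminant disc(B(r)) = (B₁₁ − B₂₂)² + 4B₁₂² satisfies Hess_α(disc(B)) = 2 J_α(B)ᵀ J_α(B) = 2 J_α(A^α)ᵀ J_α(A^α). Consequently, disc(B) has a non-degenerate critical point at α if and only if det J_α(A^α) ≠ 0. -/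
noncomputable section
open Matrix

/-!
The discriminant is `disc B = ‖F(B)‖²`. Wherever `F(B)` vanishes, the Hessian of `‖F(B)‖²` loses
the terms containing second derivatives of `F(B)` and reduces to `2 JᵀJ`, with `J` the Jacobian of
`F(B)`; since `B(α)` has a double eigenvalue, this is the situation at `α`.

To replace `B` by the matrix of `A` in the constant frame `v₁, v₂`, differentiate
`Bᵢⱼ = ⟨mᵢ, A mⱼ⟩` at `α`, where `mᵢ` are the columns of `M`. Because `mᵢ(α)` and `mⱼ(α)` are
eigenvectors of `A(α)` for the same eigenvalue `c`, the terms in which `mᵢ` or `mⱼ` is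
differentiated add up to `c · D⟨mᵢ, mⱼ⟩ = 0`, by orthonormality. Hence the two matrices have the
same first derivative at `α`, although their second derivatives differ in general.
-/

open Filter Topology

section NormSq

variable {E F : Type*} [NormedAddCommGroup E] [NormedSpace ℝ E] [NormedAddCommGroup F]
  [InnerProductSpace ℝ F] {f : E → F} {a : E}

theorem fderiv_norm_sq_eq_zero_of_eq_zero (hf : DifferentiableAt ℝ f a) (hfa : f a = 0) :
    fderiv ℝ (fun x => ‖f x‖ ^ 2) a = 0 := by
  rw [hf.hasFDerivAt.norm_sq.fderiv, hfa]
  simp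

theorem fderiv_fderiv_norm_sq_apply_of_eq_zero (hf : ContDiffAt ℝ 2 f a) (hfa : f a = 0)
    (v w : E) :
    fderiv ℝ (fun x => fderiv ℝ (fun y => ‖f y‖ ^ 2) x v) a w =
      2 * inner ℝ (fderiv ℝ f a w) (fderiv ℝ f a v) := by
  have hfd : DifferentiableAt ℝ f a := hf.differentiableAt two_ne_zero
  have hf'd : DifferentiableAt ℝ (fun x => fderiv ℝ f x v) a :=
    ((hf.fderiv_right (m := 1) le_rfl).differentiableAt one_ne_zero).clm_apply
      (differentiableAt_const v)
  have hgrad : (fun x => fderiv ℝ (fun y => ‖f y‖ ^ 2) x v) =ᶠ[𝓝 a]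
      fun x => 2 * inner ℝ (f x) (fderiv ℝ f x v) := by
    filter_upwards [hf.eventually (by simp)] with x hx
    rw [(hx.differentiableAt two_ne_zero).hasFDerivAt.norm_sq.fderiv]
    simp
  rw [hgrad.fderiv_eq, fderiv_const_mul (hfd.inner ℝ hf'd), _root_.smul_apply,
    fderiv_inner_apply ℝ hfd hf'd, hfa, inner_zero_left, zero_add, smul_eq_mul]

end NormSq

section Eigenframe

variable {𝕜 E ι κ : Type*} [NontriviallyNormedField 𝕜] [NormedAddCommGroup E] [NormedSpace 𝕜 E]
  [Fintype ι] [Fintype κ] {a : E}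

theorem contDiffAt_dotProduct_mulVec {m : WithTop ℕ∞} {v : E → ι → 𝕜} {A : E → Matrix ι κ 𝕜}
    {w : E → κ → 𝕜} (hv : ContDiffAt 𝕜 m v a) (hA : ∀ i j, ContDiffAt 𝕜 m (fun x => A x i j) a)
    (hw : ContDiffAt 𝕜 m w a) : ContDiffAt 𝕜 m (fun x => v x ⬝ᵥ A x *ᵥ w x) a :=
  ContDiffAt.sum fun i _ => (contDiffAt_pi.mp hv i).mul <|
    ContDiffAt.sum fun j _ => (hA i j).mul (contDiffAt_pi.mp hw j)

theorem fderiv_dotProduct_apply {v w : E → ι → 𝕜} (hv : DifferentiableAt 𝕜 v a)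
    (hw : DifferentiableAt 𝕜 w a) (e : E) :
    fderiv 𝕜 (fun x => v x ⬝ᵥ w x) a e = fderiv 𝕜 v a e ⬝ᵥ w a + v a ⬝ᵥ fderiv 𝕜 w a e := by
  have hsum := HasFDerivAt.fun_sum (u := Finset.univ) fun i _ =>
    (hasFDerivAt_pi'.mp hv.hasFDerivAt i).fun_mul (hasFDerivAt_pi'.mp hw.hasFDerivAt i)
  simp only [dotProduct, hsum.fderiv]
  simp [Finset.sum_add_distrib, mul_comm, add_comm]

theorem fderiv_dotProduct_mulVec_apply {v : E → ι → 𝕜} {A : E → Matrix ι κ 𝕜} {w : E → κ → 𝕜}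
    (hv : DifferentiableAt 𝕜 v a) (hA : ∀ i j, DifferentiableAt 𝕜 (fun x => A x i j) a)
    (hw : DifferentiableAt 𝕜 w a) (e : E) :
    fderiv 𝕜 (fun x => v x ⬝ᵥ A x *ᵥ w x) a e =
      fderiv 𝕜 v a e ⬝ᵥ A a *ᵥ w a + fderiv 𝕜 (fun x => v a ⬝ᵥ A x *ᵥ w a) a e +
        v a ⬝ᵥ A a *ᵥ fderiv 𝕜 w a e := by
  have hv' := hasFDerivAt_pi'.mp hv.hasFDerivAt
  have hA' := fun i j => (hA i j).hasFDerivAt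
  have hw' := hasFDerivAt_pi'.mp hw.hasFDerivAt
  have hvAw := HasFDerivAt.fun_sum (u := Finset.univ) fun i _ => (hv' i).fun_mul <|
    HasFDerivAt.fun_sum (u := Finset.univ) fun j _ => (hA' i j).fun_mul (hw' j)
  have hvaAwa := HasFDerivAt.fun_sum (u := Finset.univ) fun i _ => HasFDerivAt.const_mul
    (HasFDerivAt.fun_sum (u := Finset.univ) fun j _ => (hA' i j).mul_const (w a j)) (v a i)
  simp only [dotProduct, mulVec, hvAw.fderiv, hvaAwa.fderiv]
  simp only [Finset.sum_add_distrib, smul_add, _root_.add_apply, _root_.sum_apply,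
    _root_.smul_apply, ContinuousLinearMap.comp_apply, ContinuousLinearMap.proj_apply, smul_eq_mul,
    mul_comm]
  ring

/-- A degenerate form of the Hellmann–Feynman theorem. -/
theorem fderiv_dotProduct_mulVec_of_eigenvectors {A : E → Matrix ι ι 𝕜} {v w : E → ι → 𝕜}
    {c d : 𝕜} (hA : ∀ i j, DifferentiableAt 𝕜 (fun x => A x i j) a)
    (hv : DifferentiableAt 𝕜 v a) (hw : DifferentiableAt 𝕜 w a)
    (hvw : ∀ᶠ x in 𝓝 a, v x ⬝ᵥ w x = d) (hvA : v a ᵥ* A a = c • v a)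
    (hAw : A a *ᵥ w a = c • w a) :
    fderiv 𝕜 (fun x => v x ⬝ᵥ A x *ᵥ w x) a = fderiv 𝕜 (fun x => v a ⬝ᵥ A x *ᵥ w a) a := by
  ext e
  have hconst : fderiv 𝕜 v a e ⬝ᵥ w a + v a ⬝ᵥ fderiv 𝕜 w a e = 0 := by
    rw [← fderiv_dotProduct_apply hv hw, EventuallyEq.fderiv_eq hvw, fderiv_const_apply,
      _root_.zero_apply]
  rw [fderiv_dotProduct_mulVec_apply hv hA hw, hAw, dotProduct_mulVec _ (A a), hvA,
    dotProduct_smul, smul_dotProduct, smul_eq_mul, smul_eq_mul]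
  linear_combination c * hconst

end Eigenframe

theorem isSymm_transpose_mul_mul {ι κ R : Type*} [Fintype ι] [CommSemiring R] {A : Matrix ι ι R}
    (hA : A.IsSymm) (N : Matrix ι κ R) : (Nᵀ * A * N).IsSymm := by
  simp [IsSymm, transpose_mul, hA.eq, Matrix.mul_assoc]

theorem mulVec_col_eq_smul_of_conj_col_eq_single {ι R : Type*} [Fintype ι] [DecidableEq ι]
    [CommRing R] {A M : Matrix ι ι R} {c : R} {j : ι} (hM : Mᵀ * M = 1)
    (hcol : (Mᵀ * A * M).col j = Pi.single j c) : A *ᵥ M.col j = c • M.col j := by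
  have hAM : A * M = M * (Mᵀ * A * M) := by
    simp only [← Matrix.mul_assoc, mul_eq_one_comm.mp hM, Matrix.one_mul]
  calc A *ᵥ M.col j = (A * M).col j := rfl
    _ = M *ᵥ (Mᵀ * A * M).col j := by rw [hAM]; rfl
    _ = c • M.col j := by rw [hcol, mulVec_single, op_smul_eq_smul]

theorem col_eq_single_of_submatrix_eq_smul_one {ι κ R : Type*} [DecidableEq ι] [DecidableEq κ]
    [Semiring R] {e : κ → ι} (he : e.Injective) {C : Matrix ι ι R} {c : R}
    (hblock : C.submatrix e e = c • 1) (hoff : ∀ i ∉ Set.range e, ∀ j, C i (e j) = 0) (j : κ) :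
    C.col (e j) = Pi.single (e j) c := by
  ext i
  by_cases hi : i ∈ Set.range e
  · obtain ⟨k, rfl⟩ := hi
    have hkj : C (e k) (e j) = c • (1 : Matrix κ κ R) k j := congr_fun₂ hblock k j
    simp [hkj, one_apply, Pi.single_apply, he.eq_iff]
  · have hij : i ≠ e j := fun h => hi ⟨j, h.symm⟩
    simp [hoff i hi j, hij]

section Discriminant

variable {S T : ℝ × ℝ → Matrix (Fin 2) (Fin 2) ℝ} {r : ℝ × ℝ}

theorem discB_eq_norm_sq (S : ℝ × ℝ → Matrix (Fin 2) (Fin 2) ℝ) :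
    discB S = fun r => ‖WithLp.toLp 2 (Ftar S r)‖ ^ 2 := by
  ext r
  simp only [discB, Ftar, WithLp.prod_norm_sq_eq_of_L2, WithLp.fst, WithLp.snd, Real.norm_eq_abs,
    sq_abs]
  ring

theorem discB_eq_zero_iff : discB S r = 0 ↔ Ftar S r = 0 := by
  simp [discB_eq_norm_sq]

theorem discB_eq_discr (hS : (S r).IsSymm) : discB S r = (S r).discr := by
  rw [discr_fin_two, trace_fin_two, det_fin_two, hS.apply 0 1, discB]
  ring

theorem eq_smul_one_of_discB_eq_zero (hS : (S r).IsSymm) (h : discB S r = 0) :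
    S r = S r 0 0 • 1 := by
  obtain ⟨hdiag, hoff⟩ := Prod.mk_eq_zero.mp (discB_eq_zero_iff.mp h)
  have h11 : S r 1 1 = S r 0 0 := (sub_eq_zero.mp hdiag).symm
  have h01 : S r 0 1 = 0 := (mul_eq_zero_iff_left two_ne_zero).mp hoff
  have h10 : S r 1 0 = 0 := (hS.apply 0 1).trans h01
  ext i j
  fin_cases i <;> fin_cases j <;> simp [h01, h10, h11]

theorem contDiffAt_Ftar {m : WithTop ℕ∞} (hS : ∀ i j, ContDiffAt ℝ m (fun p => S p i j) r) :
    ContDiffAt ℝ m (Ftar S) r :=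
  ((hS 0 0).sub (hS 1 1)).prodMk (contDiffAt_const.mul (hS 0 1))

theorem Jmat_eq_fderiv_Ftar (hS : DifferentiableAt ℝ (Ftar S) r) :
    Jmat S r = !![(fderiv ℝ (Ftar S) r (1, 0)).1, (fderiv ℝ (Ftar S) r (0, 1)).1;
      (fderiv ℝ (Ftar S) r (1, 0)).2, (fderiv ℝ (Ftar S) r (0, 1)).2] := by
  have hfst : fderiv ℝ (fun p => S p 0 0 - S p 1 1) r = _ := hS.hasFDerivAt.fst.fderiv
  have hsnd : fderiv ℝ (fun p => 2 * S p 0 1) r = _ := hS.hasFDerivAt.snd.fderiv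
  simp [Jmat, pdx, pdy, hfst, hsnd]

theorem Jmat_congr (hS : ∀ i j, DifferentiableAt ℝ (fun p => S p i j) r)
    (hT : ∀ i j, DifferentiableAt ℝ (fun p => T p i j) r)
    (h : ∀ i j, fderiv ℝ (fun p => S p i j) r = fderiv ℝ (fun p => T p i j) r) :
    Jmat S r = Jmat T r := by
  simp only [Jmat, pdx, pdy, fderiv_fun_sub (hS 0 0) (hS 1 1), fderiv_fun_sub (hT 0 0) (hT 1 1),
    fderiv_const_mul (hS 0 1), fderiv_const_mul (hT 0 1), h]

theorem fderiv_discB_eq_zero (hS : DifferentiableAt ℝ (Ftar S) r) (h : discB S r = 0) :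
    fderiv ℝ (discB S) r = 0 := by
  rw [discB_eq_norm_sq]
  exact fderiv_norm_sq_eq_zero_of_eq_zero
    ((WithLp.contDiff_toLp (n := 1)).differentiable one_ne_zero _ |>.comp r hS)
    (by simp [discB_eq_zero_iff.mp h])

theorem Hess2_discB_eq (hS : ContDiffAt ℝ 2 (Ftar S) r) (h : discB S r = 0) :
    Hess2 (discB S) r = (2 : ℝ) • ((Jmat S r)ᵀ * Jmat S r) := by
  have hFd : DifferentiableAt ℝ (Ftar S) r := hS.differentiableAt two_ne_zero
  have hF : ContDiffAt ℝ 2 (fun p => WithLp.toLp 2 (Ftar S p)) r :=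
    (WithLp.contDiff_toLp).contDiffAt.comp r hS
  have hF' (v : ℝ × ℝ) : fderiv ℝ (fun p => WithLp.toLp 2 (Ftar S p)) r v =
      WithLp.toLp 2 (fderiv ℝ (Ftar S) r v) :=
    congrArg (· v) (WithLp.prodContinuousLinearEquiv 2 ℝ ℝ ℝ).symm.comp_fderiv
  have hF0 : WithLp.toLp 2 (Ftar S r) = 0 := by simp [discB_eq_zero_iff.mp h]
  rw [Jmat_eq_fderiv_Ftar hFd, discB_eq_norm_sq]
  simp only [Hess2, pdx, pdy, fderiv_fderiv_norm_sq_apply_of_eq_zero hF hF0, hF',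
    WithLp.prod_inner_apply]
  ext i j
  fin_cases i <;> fin_cases j <;> simp [Matrix.mul_apply, Fin.sum_univ_two, mul_comm, ← sq]

theorem discB_isCritical_and_det_Hess2_ne_zero_iff (hS : ContDiffAt ℝ 2 (Ftar S) r)
    (h : discB S r = 0) :
    (pdx (discB S) r = 0 ∧ pdy (discB S) r = 0 ∧ (Hess2 (discB S) r).det ≠ 0) ↔
      (Jmat S r).det ≠ 0 := by
  simp [pdx, pdy, fderiv_discB_eq_zero (hS.differentiableAt two_ne_zero) h, Hess2_discB_eq hS h]

end Discriminant

section BlockDiagonalization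

variable {n : ℕ} {A M : ℝ × ℝ → Matrix (Fin n) (Fin n) ℝ} {B : ℝ × ℝ → Matrix (Fin 2) (Fin 2) ℝ}
  {α : ℝ × ℝ} {e : Fin 2 → Fin n}

theorem eventuallyEq_dotProduct_mulVec_col
    (hB : ∀ᶠ r in 𝓝 α, ((M r)ᵀ * A r * M r).submatrix e e = B r) (i j : Fin 2) :
    (fun r => B r i j) =ᶠ[𝓝 α] fun r => (M r).col (e i) ⬝ᵥ A r *ᵥ (M r).col (e j) := by
  filter_upwards [hB] with r hr
  rw [← hr, submatrix_apply, mul_mul_apply]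
  rfl

theorem contDiffAt_block_apply {m : WithTop ℕ∞} (hA : ∀ i j, ContDiffAt ℝ m (fun r => A r i j) α)
    (hM : ∀ i j, ContDiffAt ℝ m (fun r => M r i j) α)
    (hB : ∀ᶠ r in 𝓝 α, ((M r)ᵀ * A r * M r).submatrix e e = B r) (i j : Fin 2) :
    ContDiffAt ℝ m (fun r => B r i j) α :=
  have hcol (k : Fin n) : ContDiffAt ℝ m (fun r => (M r).col k) α :=
    contDiffAt_pi.mpr fun l => hM l k
  (contDiffAt_dotProduct_mulVec (hcol _) hA (hcol _)).congr_of_eventuallyEq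
    (eventuallyEq_dotProduct_mulVec_col hB i j)

theorem tildeA_col_apply (A : ℝ × ℝ → Matrix (Fin n) (Fin n) ℝ) (N : Matrix (Fin n) (Fin n) ℝ)
    (e : Fin 2 → Fin n) (r : ℝ × ℝ) (i j : Fin 2) :
    tildeA A (N.col (e 0)) (N.col (e 1)) r i j = N.col (e i) ⬝ᵥ A r *ᵥ N.col (e j) := by
  fin_cases i <;> fin_cases j <;> rfl

theorem Jmat_block_eq_Jmat_tildeA {c : ℝ} (hA : ∀ i j, ContDiffAt ℝ 1 (fun r => A r i j) α)
    (hAsym : (A α).IsSymm) (hM : ∀ i j, ContDiffAt ℝ 1 (fun r => M r i j) α)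
    (hMorth : ∀ᶠ r in 𝓝 α, (M r)ᵀ * M r = 1)
    (hB : ∀ᶠ r in 𝓝 α, ((M r)ᵀ * A r * M r).submatrix e e = B r)
    (heig : ∀ j, A α *ᵥ (M α).col (e j) = c • (M α).col (e j)) :
    Jmat B α = Jmat (tildeA A ((M α).col (e 0)) ((M α).col (e 1))) α := by
  have hcol (k : Fin n) : DifferentiableAt ℝ (fun r => (M r).col k) α :=
    differentiableAt_pi.mpr fun l => (hM l k).differentiableAt one_ne_zero
  refine Jmat_congr
    (fun i j => (contDiffAt_block_apply hA hM hB i j).differentiableAt one_ne_zero)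
    (fun i j => ?_) (fun i j => ?_) <;> simp only [tildeA_col_apply]
  · exact (contDiffAt_dotProduct_mulVec contDiffAt_const hA contDiffAt_const).differentiableAt
      one_ne_zero
  · have horth : ∀ᶠ r in 𝓝 α,
        (M r).col (e i) ⬝ᵥ (M r).col (e j) = (1 : Matrix (Fin n) (Fin n) ℝ) (e i) (e j) := by
      filter_upwards [hMorth] with r hr using congr_fun₂ hr (e i) (e j)
    have hleft : (M α).col (e i) ᵥ* A α = c • (M α).col (e i) := by
      rw [← mulVec_transpose, hAsym.eq, heig]
    rw [(eventuallyEq_dotProduct_mulVec_col hB i j).fderiv_eq]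
    exact fderiv_dotProduct_mulVec_of_eigenvectors
      (fun k l => (hA k l).differentiableAt one_ne_zero) (hcol _) (hcol _) horth hleft (heig j)

theorem mulVec_col_eq_smul_of_discB_eq_zero (he : e.Injective) (hMorth : (M α)ᵀ * M α = 1)
    (hB : ((M α)ᵀ * A α * M α).submatrix e e = B α)
    (hoff : ∀ i ∉ Set.range e, ∀ j, ((M α)ᵀ * A α * M α) i (e j) = 0)
    (hBsymm : (B α).IsSymm) (hdisc : discB B α = 0) (j : Fin 2) :
    A α *ᵥ (M α).col (e j) = B α 0 0 • (M α).col (e j) :=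
  mulVec_col_eq_smul_of_conj_col_eq_single hMorth <| col_eq_single_of_submatrix_eq_smul_one he
    (hB.trans (eq_smul_one_of_discB_eq_zero hBsymm hdisc)) hoff j

end BlockDiagonalization

theorem stmt1_general {n : ℕ} {A M : ℝ × ℝ → Matrix (Fin n) (Fin n) ℝ}
    {B : ℝ × ℝ → Matrix (Fin 2) (Fin 2) ℝ} {α : ℝ × ℝ} {e : Fin 2 → Fin n} (he : e.Injective)
    (hA : ∀ i j, ContDiffAt ℝ 2 (fun r => A r i j) α) (hAsym : (A α).IsSymm)
    (hM : ∀ i j, ContDiffAt ℝ 2 (fun r => M r i j) α)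
    (hMorth : ∀ᶠ r in 𝓝 α, (M r)ᵀ * M r = 1)
    (hB : ∀ᶠ r in 𝓝 α, ((M r)ᵀ * A r * M r).submatrix e e = B r)
    (hoff : ∀ i ∉ Set.range e, ∀ j, ((M α)ᵀ * A α * M α) i (e j) = 0)
    (hdiscr : (B α).discr = 0) :
    let J := Jmat (tildeA A ((M α).col (e 0)) ((M α).col (e 1))) α
    Hess2 (discB B) α = (2 : ℝ) • ((Jmat B α)ᵀ * Jmat B α) ∧
    Hess2 (discB B) α = (2 : ℝ) • (Jᵀ * J) ∧
    ((pdx (discB B) α = 0 ∧ pdy (discB B) α = 0 ∧ (Hess2 (discB B) α).det ≠ 0) ↔ J.det ≠ 0) := by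
  intro J
  have hBsymm : (B α).IsSymm :=
    hB.self_of_nhds ▸ (isSymm_transpose_mul_mul hAsym (M α)).submatrix e
  have hdisc : discB B α = 0 := (discB_eq_discr hBsymm).trans hdiscr
  have hJ : Jmat B α = J := Jmat_block_eq_Jmat_tildeA
    (fun i j => (hA i j).of_le one_le_two) hAsym (fun i j => (hM i j).of_le one_le_two) hMorth hB
    (mulVec_col_eq_smul_of_discB_eq_zero he hMorth.self_of_nhds hB.self_of_nhds hoff hBsymm hdisc)
  have hF : ContDiffAt ℝ 2 (Ftar B) α := contDiffAt_Ftar (contDiffAt_block_apply hA hM hB)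
  have hHess := Hess2_discB_eq hF hdisc
  exact ⟨hHess, hJ ▸ hHess, hJ ▸ discB_isCritical_and_det_Hess2_ne_zero_iff hF hdisc⟩

/-- Theorem 2 of the paper: the Hessian of the discriminant of the
2×2 block `B` of a smooth block diagonalization equals `2 JᵀJ`, computed either from
`B` or from `A` in the eigenvector basis at `α`; consequently `disc(B)` has a
non-degenerate critical point at `α` iff `det J_α(A^α) ≠ 0`. -/
theorem stmt1 {n : ℕ} (hn : 2 < n)
    (A : ℝ × ℝ → Matrix (Fin n) (Fin n) ℝ)
    (hA : ∀ i j, ContDiff ℝ 2 fun r => A r i j)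
    (hAsym : ∀ r, (A r)ᵀ = A r)
    (lam : ℝ × ℝ → Fin n → ℝ)
    (hmono : ∀ r, Monotone (lam r))
    (heig : ∀ r, ∃ V : Matrix (Fin n) (Fin n) ℝ,
      Vᵀ * V = 1 ∧ A r = V * diagonal (lam r) * Vᵀ)
    (α : ℝ × ℝ)
    (hdeg : lam α ⟨0, by omega⟩ = lam α ⟨1, by omega⟩)
    (hgap : lam α ⟨1, by omega⟩ < lam α ⟨2, by omega⟩)
    (Ω : Set (ℝ × ℝ)) (hΩ : IsOpen Ω) (hαΩ : α ∈ Ω)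
    (M : ℝ × ℝ → Matrix (Fin n) (Fin n) ℝ)
    (hM : ∀ i j, ContDiffOn ℝ 2 (fun r => M r i j) Ω)
    (hMorth : ∀ r ∈ Ω, (M r)ᵀ * M r = 1)
    (B : ℝ × ℝ → Matrix (Fin 2) (Fin 2) ℝ)
    (hblock : ∀ r ∈ Ω, ∀ i j : Fin 2,
      ((M r)ᵀ * A r * M r) ⟨i.val, by have := i.isLt; omega⟩ ⟨j.val, by have := j.isLt; omega⟩
        = B r i j)
    (hoff : ∀ r ∈ Ω, ∀ i j : Fin n,
      (i.val < 2 ∧ 2 ≤ j.val) ∨ (2 ≤ i.val ∧ j.val < 2) → ((M r)ᵀ * A r * M r) i j = 0)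
    (hBeig : ∀ r ∈ Ω, B r 0 0 + B r 1 1 = lam r ⟨0, by omega⟩ + lam r ⟨1, by omega⟩ ∧
      (B r).det = lam r ⟨0, by omega⟩ * lam r ⟨1, by omega⟩)
    (v₁ v₂ : Fin n → ℝ)
    (hv₁ : v₁ = fun i => M α i ⟨0, by omega⟩)
    (hv₂ : v₂ = fun i => M α i ⟨1, by omega⟩) :
    Hess2 (discB B) α = (2 : ℝ) • ((Jmat B α)ᵀ * Jmat B α) ∧
    Hess2 (discB B) α
      = (2 : ℝ) • ((Jmat (tildeA A v₁ v₂) α)ᵀ * Jmat (tildeA A v₁ v₂) α) ∧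
    ((pdx (discB B) α = 0 ∧ pdy (discB B) α = 0 ∧ (Hess2 (discB B) α).det ≠ 0)
      ↔ (Jmat (tildeA A v₁ v₂) α).det ≠ 0) := by
  have hΩα : Ω ∈ 𝓝 α := hΩ.mem_nhds hαΩ
  have hdiscr : (B α).discr = 0 := by
    rw [discr_fin_two, trace_fin_two, (hBeig α hαΩ).1, (hBeig α hαΩ).2, hdeg]
    ring
  subst hv₁ hv₂
  exact stmt1_general (e := Fin.castLE hn.le) (Fin.castLE_injective _)
    (fun i j => (hA i j).contDiffAt) (hAsym α) (fun i j => (hM i j).contDiffAt hΩα)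
    (eventually_of_mem hΩα hMorth) (eventually_of_mem hΩα fun r hr => Matrix.ext (hblock r hr))
    (fun i hi j => hoff α hαΩ i _ <| .inr ⟨not_lt.mp fun h => hi ⟨⟨i, h⟩, rfl⟩, j.isLt⟩) hdiscr
end
end

section
/- Let A ∈ C²(ℝ², ℝ^{2×2}) be a 2×2 real symmetric matrix-valued function of r ∈ ℝ². Then for any orthogonal matrix U ∈ ℝ^{2×2} there exists an orthogonal matrix W ∈ ℝ^{2×2} such that for all r: F(UᵀAU)(r) = W · F(A)(r) and J_r(UᵀAU) = W · J_r(A); in particular |det J_r(A)| = |det J_r(UᵀAU)| for all r. -/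
noncomputable section
open Matrix

/-! A symmetric `2 × 2` matrix is a scalar matrix plus half of the traceless matrix
`!![F₁, F₂; F₂, -F₁]`, where `F = (F₁, F₂)` is its target vector. Conjugation by an orthogonal `U`
fixes the scalar part and acts linearly on the traceless one. Since `F` is the first column of
`!![F₁, F₂; F₂, -F₁]`, the target vector of the conjugate is
`Uᵀ !![F₁, F₂; F₂, -F₁] (a, c) = Uᵀ !![a, c; -c, a] F`, where `(a, c)` is the first column of `U`.
So `F` is transformed by `W = Uᵀ !![a, c; -c, a]`, a product of two orthogonal matrices that does
not depend on the point; the chain rule gives the same law for the Jacobian. -/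

section Conjugation

variable {R : Type*} [CommRing R]

attribute [local instance] starRingOfComm

/-- The matrix by which the conjugation `S ↦ Uᵀ S U` of symmetric matrices by an orthogonal `U` acts
on the target vector `(S₁₁ − S₂₂, 2 S₁₂)`. -/
def conjAction (U : Matrix (Fin 2) (Fin 2) R) : Matrix (Fin 2) (Fin 2) R :=
  Uᵀ * !![U 0 0, U 1 0; -U 1 0, U 0 0]

theorem conjAction_mem_orthogonalGroup {U : Matrix (Fin 2) (Fin 2) R}
    (hU : U ∈ orthogonalGroup (Fin 2) R) : conjAction U ∈ orthogonalGroup (Fin 2) R := by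
  have hcol : U 0 0 ^ 2 + U 1 0 ^ 2 = 1 := by
    simpa [mul_apply, sq] using congrFun₂ ((mem_orthogonalGroup_iff' _ _).mp hU) 0 0
  have hrot : !![U 0 0, U 1 0; -U 1 0, U 0 0] ∈ specialOrthogonalGroup (Fin 2) R :=
    of_mem_specialOrthogonalGroup_fin_two_iff.mpr ⟨rfl, (neg_neg _).symm, hcol⟩
  exact mul_mem (transpose_mem_unitaryGroup_iff.mpr hU) hrot.1

end Conjugation

theorem abs_det_eq_one_of_mem_orthogonalGroup {n R : Type*} [Fintype n] [DecidableEq n]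
    [CommRing R] [LinearOrder R] [IsStrictOrderedRing R] {W : Matrix n n R}
    (hW : W ∈ orthogonalGroup n R) : |W.det| = 1 := by
  have hsq : W.det * W.det = 1 := by
    simpa using congrArg det ((mem_orthogonalGroup_iff' _ _).mp hW)
  rcases mul_self_eq_one_iff.mp hsq with h | h <;> simp [h]

theorem Ftar_conj {S : ℝ × ℝ → Matrix (Fin 2) (Fin 2) ℝ} {r : ℝ × ℝ} (hS : (S r).IsSymm)
    {U : Matrix (Fin 2) (Fin 2) ℝ} (hU : U ∈ orthogonalGroup (Fin 2) ℝ) :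
    Ftar (fun p => Uᵀ * S p * U) r = mulVec2 (conjAction U) (Ftar S r) := by
  have hUtU : Uᵀ * U = 1 := (mem_orthogonalGroup_iff' _ _).mp hU
  have hUUt : U * Uᵀ = 1 := (mem_orthogonalGroup_iff _ _).mp hU
  have hcol₀₀ : U 0 0 * U 0 0 + U 1 0 * U 1 0 = 1 := by
    simpa [mul_apply] using congrFun₂ hUtU 0 0
  have hcol₁₁ : U 0 1 * U 0 1 + U 1 1 * U 1 1 = 1 := by
    simpa [mul_apply] using congrFun₂ hUtU 1 1
  have hcol₀₁ : U 0 0 * U 0 1 + U 1 0 * U 1 1 = 0 := by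
    simpa [mul_apply] using congrFun₂ hUtU 0 1
  have hrow₀₀ : U 0 0 * U 0 0 + U 0 1 * U 0 1 = 1 := by
    simpa [mul_apply] using congrFun₂ hUUt 0 0
  have hrow₀₁ : U 0 0 * U 1 0 + U 0 1 * U 1 1 = 0 := by
    simpa [mul_apply] using congrFun₂ hUUt 0 1
  have hsym : S r 1 0 = S r 0 1 := hS.apply 0 1
  ext <;> simp only [Ftar, mulVec2, conjAction, mul_apply, transpose_apply, Fin.sum_univ_two,
    Fin.isValue, hsym, of_apply, cons_val', cons_val_zero, cons_val_one, cons_val_fin_one, mul_neg]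
  · linear_combination S r 0 0 * (hcol₀₀ - hrow₀₀) + S r 1 1 * (hrow₀₀ - hcol₁₁) -
      2 * S r 0 1 * hrow₀₁
  · linear_combination (S r 0 0 + S r 1 1) * hcol₀₁

section Jacobian

variable {S T : ℝ × ℝ → Matrix (Fin 2) (Fin 2) ℝ} {r : ℝ × ℝ}

theorem differentiable_Ftar (hS : ∀ i j, Differentiable ℝ fun p => S p i j) :
    Differentiable ℝ (Ftar S) :=
  ((hS 0 0).sub (hS 1 1)).prodMk ((hS 0 1).const_mul 2)

theorem mulVec2_eq_toLin_finTwoProd (W : Matrix (Fin 2) (Fin 2) ℝ) :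
    mulVec2 W = toLin (.finTwoProd ℝ) (.finTwoProd ℝ) W := by
  funext v
  rw [eta_fin_two W, toLin_finTwoProd_apply]
  rfl

theorem Jmat_eq_toMatrix_fderiv (hS : DifferentiableAt ℝ (Ftar S) r) :
    Jmat S r =
      LinearMap.toMatrix (.finTwoProd ℝ) (.finTwoProd ℝ) (fderiv ℝ (Ftar S) r).toLinearMap := by
  have hprod : fderiv ℝ (Ftar S) r =
      (fderiv ℝ (fun p => S p 0 0 - S p 1 1) r).prod (fderiv ℝ (fun p => 2 * S p 0 1) r) :=
    hS.fst.fderiv_prodMk hS.snd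
  ext i j
  fin_cases i <;> fin_cases j <;> simp [Jmat, pdx, pdy, hprod, LinearMap.toMatrix_apply]

theorem Jmat_eq_mul_of_Ftar_eventuallyEq {W : Matrix (Fin 2) (Fin 2) ℝ}
    (hS : DifferentiableAt ℝ (Ftar S) r)
    (hT : Ftar T =ᶠ[nhds r] fun p => mulVec2 W (Ftar S p)) :
    Jmat T r = W * Jmat S r := by
  let L := toLin (.finTwoProd ℝ) (.finTwoProd ℝ) W
  rw [mulVec2_eq_toLin_finTwoProd] at hT
  have hderiv : HasFDerivAt (Ftar T) (L.toContinuousLinearMap ∘L fderiv ℝ (Ftar S) r) r :=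
    (L.toContinuousLinearMap.hasFDerivAt.comp r hS.hasFDerivAt).congr_of_eventuallyEq hT
  calc Jmat T r
      = LinearMap.toMatrix (.finTwoProd ℝ) (.finTwoProd ℝ)
          (L ∘ₗ (fderiv ℝ (Ftar S) r).toLinearMap) := by
        rw [Jmat_eq_toMatrix_fderiv hderiv.differentiableAt, hderiv.fderiv]
        rfl
    _ = W * Jmat S r := by
        rw [LinearMap.toMatrix_comp _ (.finTwoProd ℝ), LinearMap.toMatrix_toLin,
          Jmat_eq_toMatrix_fderiv hS]

end Jacobian

theorem stmt2_general (U : Matrix (Fin 2) (Fin 2) ℝ) (hU : Uᵀ * U = 1) :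
    ∃ W : Matrix (Fin 2) (Fin 2) ℝ, Wᵀ * W = 1 ∧
      ∀ A : ℝ × ℝ → Matrix (Fin 2) (Fin 2) ℝ, Differentiable ℝ (Ftar A) → (∀ r, (A r)ᵀ = A r) →
        (∀ r, Ftar (fun p => Uᵀ * A p * U) r = mulVec2 W (Ftar A r)) ∧
        (∀ r, Jmat (fun p => Uᵀ * A p * U) r = W * Jmat A r) ∧
        (∀ r, |(Jmat A r).det| = |(Jmat (fun p => Uᵀ * A p * U) r).det|) := by
  have hU' : U ∈ orthogonalGroup (Fin 2) ℝ := (mem_orthogonalGroup_iff' _ _).mpr hU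
  have hW := conjAction_mem_orthogonalGroup hU'
  refine ⟨conjAction U, (mem_orthogonalGroup_iff' _ _).mp hW, fun A hA hAsym => ?_⟩
  have hF (r : ℝ × ℝ) := Ftar_conj (hAsym r) hU'
  have hJ (r : ℝ × ℝ) := Jmat_eq_mul_of_Ftar_eventuallyEq (hA r) (.of_forall hF)
  refine ⟨hF, hJ, fun r => ?_⟩
  rw [hJ, det_mul, abs_mul, abs_det_eq_one_of_mem_orthogonalGroup hW, one_mul]

/-- Lemma 1 of the paper: basis-change covariance of `F` and `J`
for 2×2 symmetric families, and invariance of `|det J|`. -/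
theorem stmt2 (A : ℝ × ℝ → Matrix (Fin 2) (Fin 2) ℝ)
    (hA : ∀ i j, ContDiff ℝ 2 fun r => A r i j)
    (hAsym : ∀ r, (A r)ᵀ = A r)
    (U : Matrix (Fin 2) (Fin 2) ℝ) (hU : Uᵀ * U = 1) :
    ∃ W : Matrix (Fin 2) (Fin 2) ℝ, Wᵀ * W = 1 ∧
      (∀ r, Ftar (fun p => Uᵀ * A p * U) r = mulVec2 W (Ftar A r)) ∧
      (∀ r, Jmat (fun p => Uᵀ * A p * U) r = W * Jmat A r) ∧
      (∀ r, |(Jmat A r).det| = |(Jmat (fun p => Uᵀ * A p * U) r).det|) := by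
  obtain ⟨W, hW, h⟩ := stmt2_general U hU
  exact ⟨W, hW, h A (differentiable_Ftar fun i j => (hA i j).differentiable two_ne_zero) hAsym⟩
end
end

section
/- Let B ∈ C²(ℝ², ℝ^{2×2}) be a 2×2 real symmetric matrix-valued function, r ∈ ℝ² a point where J_r(B) is invertible, and U ∈ ℝ^{2×2} a constant orthogonal matrix. Then the one-step iteration map satisfies σ(B, r) = σ(UᵀBU, r), i.e. r − J_r(B)⁻¹F(B)(r) = r − J_r(UᵀBU)⁻¹F(UᵀBU)(r). -/
noncomputable section
open Matrix

/- For a symmetric `2 × 2` matrix `S`, the pair `F(S) = (S₁₁ - S₂₂, 2 S₁₂)` is a system of linear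
coordinates on its trace-free part. Conjugation by an orthogonal `U` fixes scalar matrices, so it
acts on `F(S)` through a linear map of `ℝ²`, whose inverse comes from conjugation by `Uᵀ`. The
invariance of `σ` is therefore an instance of the affine invariance of Newton's method: replacing
`f` by `L ∘ f`, with `L` an invertible linear map, does not change the Newton step. -/

section Newton

variable {𝕜 E F G : Type*} [NontriviallyNormedField 𝕜]
  [NormedAddCommGroup E] [NormedSpace 𝕜 E] [NormedAddCommGroup F] [NormedSpace 𝕜 F]
  [NormedAddCommGroup G] [NormedSpace 𝕜 G]

variable (𝕜) in
/-- One step of Newton's method for the equation `f = 0`, starting from `x`. Since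
`ContinuousLinearMap.inverse` is `0` on non-invertible maps, the step stays at `x` when the
derivative is not invertible. -/
def newtonStep (f : E → F) (x : E) : E :=
  x - (fderiv 𝕜 f x).inverse (f x)

theorem newtonStep_congr {f g : E → F} {x : E} (h : f =ᶠ[nhds x] g) :
    newtonStep 𝕜 f x = newtonStep 𝕜 g x := by
  rw [newtonStep, newtonStep, h.fderiv_eq, h.eq_of_nhds]

theorem newtonStep_equiv_comp (L : F ≃L[𝕜] G) (f : E → F) (x : E) :
    newtonStep 𝕜 (L ∘ f) x = newtonStep 𝕜 f x := by
  simp [newtonStep, L.comp_fderiv]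

theorem toMatrix_inverse [CompleteSpace 𝕜] {ι : Type*} [Fintype ι] [DecidableEq ι]
    (b : Module.Basis ι 𝕜 E) (A : E →L[𝕜] E) :
    LinearMap.toMatrix b b A.inverse = (LinearMap.toMatrix b b A)⁻¹ := by
  have : FiniteDimensional 𝕜 E := b.finiteDimensional_of_finite
  by_cases hA : A.IsInvertible
  · refine (inv_eq_left_inv ?_).symm
    rw [← LinearMap.toMatrix_comp, ← ContinuousLinearMap.toLinearMap_comp, hA.inverse_comp_self,
      ContinuousLinearMap.coe_id, LinearMap.toMatrix_id]
  · have hdet : ¬ IsUnit (LinearMap.toMatrix b b A).det := fun h =>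
      hA ⟨A.toContinuousLinearEquivOfDetNeZero (by simpa using h.ne_zero), rfl⟩
    rw [ContinuousLinearMap.inverse_of_not_isInvertible hA, nonsing_inv_apply_not_isUnit _ hdet,
      ContinuousLinearMap.toLinearMap_zero, map_zero]

end Newton

theorem isSymm_transpose_mul_mul_s5 {n R : Type*} [Fintype n] [CommSemiring R] {S : Matrix n n R}
    (hS : S.IsSymm) (U : Matrix n n R) : (Uᵀ * S * U).IsSymm := by
  simp [IsSymm, transpose_mul, hS.eq, Matrix.mul_assoc]

section Deviator

/-- The linear map `S ↦ (S₁₁ - S₂₂, 2 S₁₂)` underlying `Ftar`. For symmetric `S` these are the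
coordinates of the deviator (trace-free part) of `S`, see `ofDeviator`. -/
def deviator (R : Type*) [CommRing R] : Matrix (Fin 2) (Fin 2) R →ₗ[R] R × R where
  toFun S := (S 0 0 - S 1 1, 2 * S 0 1)
  map_add' S T := by simp [mul_add, add_sub_add_comm]
  map_smul' c S := by simp [mul_sub, mul_left_comm]

theorem deviator_one (R : Type*) [CommRing R] : deviator R 1 = 0 := by
  simp [deviator]

variable {K : Type*} [Field K]

variable (K) in
/-- The trace-free symmetric matrix with given `deviator` coordinates, when `2 ≠ 0` in `K`. -/
def ofDeviator : K × K →ₗ[K] Matrix (Fin 2) (Fin 2) K where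
  toFun v := !![v.1 / 2, v.2 / 2; v.2 / 2, -(v.1 / 2)]
  map_add' v w := by simp [add_div, add_comm]
  map_smul' c v := by simp [mul_div_assoc]

theorem isSymm_ofDeviator (v : K × K) : (ofDeviator K v).IsSymm := by
  ext i j
  fin_cases i <;> fin_cases j <;> rfl

/-- The linear map induced on `deviator` coordinates by the change of basis `S ↦ Uᵀ * S * U`. -/
def deviatorConj (U : Matrix (Fin 2) (Fin 2) K) : K × K →ₗ[K] K × K :=
  deviator K ∘ₗ LinearMap.mulLeftRight K (Uᵀ, U) ∘ₗ ofDeviator K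

variable [NeZero (2 : K)]

theorem deviator_ofDeviator (v : K × K) : deviator K (ofDeviator K v) = v := by
  ext <;> simp [deviator, ofDeviator, mul_div_cancel₀, two_ne_zero]

theorem ofDeviator_deviator_add_trace {S : Matrix (Fin 2) (Fin 2) K} (hS : S.IsSymm) :
    ofDeviator K (deviator K S) + (S.trace / 2) • 1 = S := by
  have h00 : (S 0 0 - S 1 1) / 2 + (S 0 0 + S 1 1) / 2 = S 0 0 := by field
  have h11 : -((S 0 0 - S 1 1) / 2) + (S 0 0 + S 1 1) / 2 = S 1 1 := by field
  ext i j
  fin_cases i <;> fin_cases j <;>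
    simp [deviator, ofDeviator, trace_fin_two, hS.apply 0 1, h00, h11, two_ne_zero]

theorem deviatorConj_deviator {U S : Matrix (Fin 2) (Fin 2) K} (hU : Uᵀ * U = 1) (hS : S.IsSymm) :
    deviatorConj U (deviator K S) = deviator K (Uᵀ * S * U) := by
  conv_rhs => rw [← ofDeviator_deviator_add_trace hS]
  simp [deviatorConj, Matrix.mul_add, Matrix.add_mul, hU, deviator_one]

theorem deviatorConj_transpose_deviatorConj {U : Matrix (Fin 2) (Fin 2) K} (hU : Uᵀ * U = 1)
    (v : K × K) : deviatorConj Uᵀ (deviatorConj U v) = v := by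
  have hU' : U * Uᵀ = 1 := mul_eq_one_comm.mp hU
  have hv : deviatorConj U v = deviator K (Uᵀ * ofDeviator K v * U) := rfl
  calc deviatorConj Uᵀ (deviatorConj U v)
      = deviator K (U * (Uᵀ * ofDeviator K v * U) * Uᵀ) := by
        rw [hv, deviatorConj_deviator (by rwa [transpose_transpose])
          (isSymm_transpose_mul_mul_s5 (isSymm_ofDeviator v) U), transpose_transpose]
    _ = deviator K ((U * Uᵀ) * ofDeviator K v * (U * Uᵀ)) := by simp only [Matrix.mul_assoc]
    _ = v := by rw [hU', Matrix.one_mul, Matrix.mul_one, deviator_ofDeviator]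

/-- `deviatorConj U` as a linear automorphism, for orthogonal `U`. -/
def deviatorConjEquiv (U : Matrix (Fin 2) (Fin 2) K) (hU : Uᵀ * U = 1) : (K × K) ≃ₗ[K] K × K where
  __ := deviatorConj U
  invFun := deviatorConj Uᵀ
  left_inv := deviatorConj_transpose_deviatorConj hU
  right_inv v := by
    simpa using deviatorConj_transpose_deviatorConj (U := Uᵀ) (mul_eq_one_comm.mp hU) v

end Deviator

section Target

variable {S : ℝ × ℝ → Matrix (Fin 2) (Fin 2) ℝ} {r : ℝ × ℝ}

theorem mulVec2_eq_toLin (M : Matrix (Fin 2) (Fin 2) ℝ) (v : ℝ × ℝ) :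
    mulVec2 M v = toLin (.finTwoProd ℝ) (.finTwoProd ℝ) M v := by
  rw [eta_fin_two M, toLin_finTwoProd_apply]
  rfl

theorem Jmat_eq_toMatrix (hS : DifferentiableAt ℝ (Ftar S) r) :
    Jmat S r = LinearMap.toMatrix (.finTwoProd ℝ) (.finTwoProd ℝ) (fderiv ℝ (Ftar S) r) := by
  have hfderiv : fderiv ℝ (Ftar S) r = (fderiv ℝ (fun p => S p 0 0 - S p 1 1) r).prod
      (fderiv ℝ (fun p => 2 * S p 0 1) r) := hS.fst.fderiv_prodMk hS.snd
  ext i j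
  fin_cases i <;> fin_cases j <;> simp [hfderiv, Jmat, pdx, pdy, LinearMap.toMatrix_apply]

theorem newtonStep_Ftar (hS : DifferentiableAt ℝ (Ftar S) r) :
    newtonStep ℝ (Ftar S) r = r - mulVec2 (Jmat S r)⁻¹ (Ftar S r) := by
  rw [newtonStep, mulVec2_eq_toLin, Jmat_eq_toMatrix hS, ← toMatrix_inverse, toLin_toMatrix,
    ContinuousLinearMap.coe_coe]

-- `fderiv` is `0` where a function is not differentiable, so `Jmat S r` would have a zero row.
theorem differentiableAt_Ftar_of_det_Jmat_ne_zero (hJ : (Jmat S r).det ≠ 0) :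
    DifferentiableAt ℝ (Ftar S) r := by
  refine DifferentiableAt.prodMk ?_ ?_ <;> by_contra h <;>
    exact hJ (by simp [Jmat, pdx, pdy, fderiv_zero_of_not_differentiableAt h])

theorem Ftar_eq_deviator_comp (S : ℝ × ℝ → Matrix (Fin 2) (Fin 2) ℝ) : Ftar S = deviator ℝ ∘ S :=
  rfl

theorem Ftar_conj_eventuallyEq {U : Matrix (Fin 2) (Fin 2) ℝ} (hU : Uᵀ * U = 1)
    (hS : ∀ᶠ p in nhds r, (S p).IsSymm) :
    Ftar (fun p => Uᵀ * S p * U) =ᶠ[nhds r]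
      (deviatorConjEquiv U hU).toContinuousLinearEquiv ∘ Ftar S := by
  simp only [Ftar_eq_deviator_comp]
  exact hS.mono fun _ hp => (deviatorConj_deviator hU hp).symm

end Target

theorem stmt5_general (B : ℝ × ℝ → Matrix (Fin 2) (Fin 2) ℝ) (r : ℝ × ℝ)
    (hBsym : ∀ᶠ p in nhds r, (B p).IsSymm) (hJ : (Jmat B r).det ≠ 0)
    (U : Matrix (Fin 2) (Fin 2) ℝ) (hU : Uᵀ * U = 1) :
    r - mulVec2 (Jmat B r)⁻¹ (Ftar B r) =
      r - mulVec2 (Jmat (fun p => Uᵀ * B p * U) r)⁻¹ (Ftar (fun p => Uᵀ * B p * U) r) := by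
  have hconj := Ftar_conj_eventuallyEq hU hBsym
  have hdiff : DifferentiableAt ℝ (Ftar B) r := differentiableAt_Ftar_of_det_Jmat_ne_zero hJ
  have hdiff_conj : DifferentiableAt ℝ (Ftar fun p => Uᵀ * B p * U) r :=
    hconj.differentiableAt_iff.mpr ((ContinuousLinearEquiv.comp_differentiableAt_iff _).mpr hdiff)
  rw [← newtonStep_Ftar hdiff, ← newtonStep_Ftar hdiff_conj, newtonStep_congr hconj,
    newtonStep_equiv_comp]

/-- Lemma 4 of the paper: invariance of the one-step Newton
iteration map `σ` under a constant orthogonal change of basis. -/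
theorem stmt5 (B : ℝ × ℝ → Matrix (Fin 2) (Fin 2) ℝ)
    (hB : ∀ i j, ContDiff ℝ 2 fun r => B r i j)
    (hBsym : ∀ r, (B r)ᵀ = B r)
    (r : ℝ × ℝ) (hJ : (Jmat B r).det ≠ 0)
    (U : Matrix (Fin 2) (Fin 2) ℝ) (hU : Uᵀ * U = 1) :
    r - mulVec2 (Jmat B r)⁻¹ (Ftar B r) =
      r - mulVec2 (Jmat (fun p => Uᵀ * B p * U) r)⁻¹ (Ftar (fun p => Uᵀ * B p * U) r) :=
  stmt5_general B r (.of_forall hBsym) hJ U hU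
end
end
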